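/- Let d > 3 be an integer, ε ≠ 0 and τ ∈ ℝ. Let V : ℝ^d → ℝ be nonnegative, continuously differentiable away from the origin, with γ·V(x) + |x|·∂_rV(x) ≤ (1−η)(d−1)(d−3)/(2|x|²) for some γ > 0, η > 0 and all x ≠ 0. If u is a classical solution of −Δu + V u ± iεu − τu = f with u, ∇u ∈ L²(ℝ^d) and f ∈ L²(ℝ^d), then ‖∇u‖²_X + ∫_{ℝ^d} (V(x)/|x|)|u(x)|² dx + sup_{R>0} R^{−3}∫_{B(0,R)} |u(x)|² dx + (d−3)∫_{ℝ^d} |u(x)|²/|x|³ dx ≤ C‖f‖²_{X*} + (1/4)(|ε| + max{0,τ})‖u‖²_X, with C depending only on d, γ, η. -/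

import Mathlib

/-!
Morawetz multiplier proof. Write `u = v + i w`, `U = |u|²`, `G = |∇u|²`, `F = |f|²`, `e = ±ε`.

* For `a > 0` the weight `ψ = √(a² + |x|²)` satisfies `D²ψ ≥ a² ψ⁻³`, `Δψ ≤ d / |x|` and
  `-Δ²ψ ≥ (d-1)(d-3) ψ⁻³`. Testing the equation with `∇ψ·∇ū + ½ Δψ ū` and taking real parts gives
  a pointwise divergence identity (`morF'_sum`). Since `u`, `∇u`, `√V u` are square integrable, and
  `|u|² / |x|³` is integrable because `d > 3`, the flux is negligible both at the origin and at
  infinity, so the identity may be integrated (`lintegral_le_of_div`). With the repulsivity of `V`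
  this is `Sol.morawetz`; the right-hand side is the integral of `morB`.
* Letting `a → 0` (Fatou) and absorbing the remainder `(1-η)(d-1)(d-3)/4 ∫ U/|x|³` controls
  `∫ V U / |x|` and `∫ U / |x|³` (`Sol.absorbed`). Taking `a = R` controls `R⁻¹ ∫_{B_R} G`
  (`Sol.ball_grad`). The term `R⁻³ ∫_{B_R} U` is at most `∫ U / |x|³`.
* The source terms are `∫ √F √G`, `(d/2) ∫ √F √U / |x|` and `|e| ∫ √U √G`. Testing the equation
  with `ū` gives `|e| ∫ U ≤ ∫ √F √U` and `∫ G ≤ τ₊ ∫ U + ∫ √F √U`, whence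
  `|e| ∫ √U √G ≤ (|e| + τ₊)^{1/2} ∫ √F √U` (`Sol.cross_term`).
* Cauchy–Schwarz on dyadic shells (`duality`) bounds all three by `‖f‖_{X*}` times the square roots
  of `‖∇u‖²_X`, `∫ U/|x|³`, and `(|e| + τ₊) ‖u‖²_X`. All quantities are finite, so the
  arithmetic-geometric inequality closes the estimate (`absorb`, `Sol.estimate`).
-/


noncomputable section
open MeasureTheory Metric Set ENNReal

abbrev Ed (d : ℕ) := EuclideanSpace ℝ (Fin d)

/-- partial derivative of a complex valued function -/
def pd {d : ℕ} (u : Ed d → ℂ) (i : Fin d) (x : Ed d) : ℂ :=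
  fderiv ℝ u x (EuclideanSpace.single i 1)

/-- Laplacian of a complex valued function -/
def lap {d : ℕ} (u : Ed d → ℂ) (x : Ed d) : ℂ :=
  ∑ i, fderiv ℝ (pd u i) x (EuclideanSpace.single i 1)

/-- squared norm of the gradient, as an extended nonnegative real -/
def gradSq {d : ℕ} (u : Ed d → ℂ) (x : Ed d) : ℝ≥0∞ :=
  ∑ i, (‖pd u i x‖₊ : ℝ≥0∞) ^ 2

/-- |u(x)|² as an extended nonnegative real -/
def usq {d : ℕ} (u : Ed d → ℂ) (x : Ed d) : ℝ≥0∞ := (‖u x‖₊ : ℝ≥0∞) ^ 2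

/-- radial derivative ∂_r V (x) = (x/|x|)·∇V(x) -/
def radialDeriv {d : ℕ} (V : Ed d → ℝ) (x : Ed d) : ℝ :=
  fderiv ℝ V x x / ‖x‖

/-- Morrey–Campanato type quantity sup_{R>0} (1/R) ∫_{B(0,R)} g -/
def nX2 {d : ℕ} (g : Ed d → ℝ≥0∞) : ℝ≥0∞ :=
  ⨆ (R : ℝ) (_ : 0 < R), (ENNReal.ofReal R)⁻¹ * ∫⁻ x in ball (0 : Ed d) R, g x

/-- dyadic shell C_j -/
def shell (d : ℕ) (j : ℤ) : Set (Ed d) := {x | (2:ℝ)^j < ‖x‖ ∧ ‖x‖ ≤ (2:ℝ)^(j+1)}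

/-- the dual norm ‖f‖_{X*} applied to g = |f|² -/
def nXstar {d : ℕ} (g : Ed d → ℝ≥0∞) : ℝ≥0∞ :=
  ∑' j : ℤ, (ENNReal.ofReal ((2:ℝ)^(j+1)) * ∫⁻ x in shell d j, g x) ^ (1/2 : ℝ)

/-- the index j₀ with 2^{j₀} < ρ ≤ 2^{j₀+1} -/
def jIdx (ρ : ℝ) : ℤ := ⌈Real.logb 2 ρ⌉ - 1

/-- sup_{R ≥ ρ} (1/R)∫_{B(0,R)} g -/
def nX2r {d : ℕ} (ρ : ℝ) (g : Ed d → ℝ≥0∞) : ℝ≥0∞ :=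
  ⨆ (R : ℝ) (_ : ρ ≤ R), (ENNReal.ofReal R)⁻¹ * ∫⁻ x in ball (0 : Ed d) R, g x

/-- the dual norm ‖f‖_{X*_ρ} applied to g = |f|² -/
def nXstarr {d : ℕ} (ρ : ℝ) (g : Ed d → ℝ≥0∞) : ℝ≥0∞ :=
  (∑' j : {j : ℤ // jIdx ρ ≤ j},
    (ENNReal.ofReal ((2:ℝ)^((j:ℤ)+1)) * ∫⁻ x in shell d (j:ℤ), g x) ^ (1/2 : ℝ))
  + (ENNReal.ofReal ρ * ∫⁻ x in ball (0 : Ed d) ρ, g x) ^ (1/2 : ℝ)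

/-- integral of g over the sphere of radius R w.r.t. (d-1)-dimensional Hausdorff measure -/
def sphInt {d : ℕ} (R : ℝ) (g : Ed d → ℝ≥0∞) : ℝ≥0∞ :=
  ∫⁻ x in Metric.sphere (0 : Ed d) R, g x ∂(μH[(d:ℝ) - 1])

open Filter Topology

/-! ### Integration of divergence identities -/

abbrev bv {d : ℕ} (j : Fin d) : Ed d := EuclideanSpace.single j (1 : ℝ)

lemma lineDeriv_normSq {d : ℕ} (x : Ed d) (j : Fin d) :
    HasLineDerivAt ℝ (fun y : Ed d => ‖y‖ ^ 2) (2 * x j) x (bv j) := by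
  have h := (hasStrictFDerivAt_norm_sq x).hasFDerivAt.hasLineDerivAt (bv j)
  have e : ((2 • (innerSL ℝ) x) (bv j) : ℝ) = 2 * x j := by
    rw [two_smul, add_apply, innerSL_apply_apply,
      EuclideanSpace.inner_single_right]
    simp [two_mul]
  rw [e] at h
  exact h

lemma lineDeriv_coord {d : ℕ} (x : Ed d) (i j : Fin d) :
    HasLineDerivAt ℝ (fun y : Ed d => y i) (if i = j then 1 else 0) x (bv j) := by
  have h : HasLineDerivAt ℝ (fun y : Ed d => y i) ((bv j : Ed d) i) x (bv j) :=
    ((EuclideanSpace.proj i : Ed d →L[ℝ] ℝ).hasFDerivAt (x := x)).hasLineDerivAt (bv j)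
  rw [PiLp.single_apply] at h
  exact h

lemma hasDerivAt_posPart_sq (t : ℝ) :
    HasDerivAt (fun s : ℝ => (max 0 s) ^ 2) (2 * max 0 t) t := by
  rcases lt_trichotomy t 0 with h | h | h
  · have : (fun s : ℝ => (max 0 s) ^ 2) =ᶠ[𝓝 t] fun _ => 0 := by
      filter_upwards [Iio_mem_nhds h] with s hs
      simp [max_eq_left (le_of_lt (mem_Iio.1 hs))]
    rw [max_eq_left h.le, mul_zero]
    exact (hasDerivAt_const t (0:ℝ)).congr_of_eventuallyEq this
  · subst h
    rw [hasDerivAt_iff_isLittleO]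
    simp only [max_self, sub_zero, mul_zero, smul_zero, ne_eq, OfNat.ofNat_ne_zero,
      not_false_eq_true, zero_pow]
    have h1 : (fun s : ℝ => (max 0 s) ^ 2) =O[𝓝 0] fun s : ℝ => s ^ 2 := by
      refine Asymptotics.IsBigO.of_bound 1 (Eventually.of_forall fun s => ?_)
      rw [one_mul, norm_pow, norm_pow]
      gcongr
      simp only [Real.norm_eq_abs]
      rw [abs_of_nonneg (le_max_left _ _)]
      exact max_le (abs_nonneg _) (le_abs_self _)
    refine h1.trans_isLittleO ?_
    simpa using Asymptotics.isLittleO_pow_id (𝕜 := ℝ) (n := 2) (by norm_num)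
  · have : (fun s : ℝ => (max 0 s) ^ 2) =ᶠ[𝓝 t] fun s => s ^ 2 := by
      filter_upwards [Ioi_mem_nhds h] with s hs
      rw [max_eq_right (le_of_lt (mem_Ioi.1 hs))]
    rw [max_eq_right h.le]
    have h2 := (hasDerivAt_pow 2 t).congr_of_eventuallyEq this
    simpa using h2

/-- The profile whose squared positive part is the cutoff: positive only for
`1/(n+1) < ‖x‖ < n+1`. -/
def cutH {d : ℕ} (n : ℕ) (x : Ed d) : ℝ := 1 - (‖x‖ ^ 2 + (‖x‖ ^ 2)⁻¹) / ((n : ℝ) + 1) ^ 2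

/-- A `C¹` radial cutoff, supported in `1/(n+1) ≤ ‖x‖ ≤ n+1` and increasing to `1` off the origin.
The value at the origin is set by hand because `0⁻¹ = 0`. -/
def cut {d : ℕ} (n : ℕ) (x : Ed d) : ℝ := if x = 0 then 0 else (max 0 (cutH n x)) ^ 2

/-- The `j`-th partial derivative of `cut n`. -/
def cutD {d : ℕ} (n : ℕ) (j : Fin d) (x : Ed d) : ℝ :=
  if x = 0 then 0 else
    2 * max 0 (cutH n x) * (-(2 * x j - 2 * x j * ((‖x‖ ^ 2)⁻¹) ^ 2) / ((n : ℝ) + 1) ^ 2)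

def cutK (d n : ℕ) : Set (Ed d) := {x | ((n : ℝ) + 1)⁻¹ ≤ ‖x‖ ∧ ‖x‖ ≤ n + 1}

lemma cutK_compact (d n : ℕ) : IsCompact (cutK d n) := by
  have : cutK d n = closedBall 0 (n + 1) ∩ {x | ((n : ℝ) + 1)⁻¹ ≤ ‖x‖} := by
    ext x; simp [cutK, and_comm]
  rw [this]
  exact (isCompact_closedBall _ _).inter_right (isClosed_le continuous_const continuous_norm)

lemma cutK_ne {d n : ℕ} {x : Ed d} (hx : x ∈ cutK d n) : x ≠ 0 := by
  rintro rfl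
  have h := hx.1
  rw [norm_zero] at h
  have : (0 : ℝ) < ((n : ℝ) + 1)⁻¹ := by positivity
  linarith

lemma cutK_of_pos {d n : ℕ} {x : Ed d} (hx : x ≠ 0) (h : 0 < cutH n x) : x ∈ cutK d n := by
  have hr : 0 < ‖x‖ := norm_pos_iff.2 hx
  have hn : (0 : ℝ) < (n : ℝ) + 1 := by positivity
  unfold cutH at h
  rw [sub_pos, div_lt_one (by positivity)] at h
  have h2 : 0 < (‖x‖ ^ 2)⁻¹ := by positivity
  constructor
  · have : (‖x‖⁻¹) ^ 2 ≤ ((n : ℝ) + 1) ^ 2 := by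
      rw [inv_pow]; nlinarith [sq_nonneg ‖x‖]
    have := abs_le_of_sq_le_sq this hn.le
    exact inv_le_of_inv_le₀ hr ((le_abs_self _).trans this)
  · have : ‖x‖ ^ 2 ≤ ((n : ℝ) + 1) ^ 2 := by linarith
    exact (le_abs_self _).trans (abs_le_of_sq_le_sq this hn.le)

lemma cut_nonneg {d : ℕ} (n : ℕ) (x : Ed d) : 0 ≤ cut n x := by
  unfold cut; split_ifs <;> positivity

lemma cut_le_one {d : ℕ} (n : ℕ) (x : Ed d) : cut n x ≤ 1 := by
  unfold cut; split_ifs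
  · norm_num
  · have : cutH n x ≤ 1 := by unfold cutH; rw [sub_le_self_iff]; positivity
    have h0 : max 0 (cutH n x) ≤ 1 := max_le zero_le_one this
    have h1 : 0 ≤ max 0 (cutH n x) := le_max_left _ _
    nlinarith

lemma cut_zero_off {d n : ℕ} {x : Ed d} (hx : x ∉ cutK d n) : cut n x = 0 := by
  unfold cut; split_ifs with h
  · rfl
  · rw [max_eq_left, zero_pow two_ne_zero]
    by_contra h'
    exact hx (cutK_of_pos h (not_le.1 h'))

lemma cutD_zero_off {d n : ℕ} {j : Fin d} {x : Ed d} (hx : x ∉ cutK d n) : cutD n j x = 0 := by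
  unfold cutD; split_ifs with h
  · rfl
  · rw [max_eq_left]
    · simp
    by_contra h'
    exact hx (cutK_of_pos h (not_le.1 h'))

lemma cut_tsupport (d n : ℕ) : tsupport (cut (d := d) n) ⊆ cutK d n := by
  refine closure_minimal (fun x hx => ?_) (cutK_compact d n).isClosed
  by_contra h
  exact hx (cut_zero_off h)

lemma cutH_continuousOn (d n : ℕ) : ContinuousOn (cutH (d := d) n) {0}ᶜ := by
  unfold cutH
  have : ContinuousOn (fun x : Ed d => (‖x‖ ^ 2)⁻¹) {0}ᶜ := by
    refine ContinuousOn.inv₀ (by fun_prop) fun x hx => ?_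
    have : 0 < ‖x‖ := norm_pos_iff.2 hx
    positivity
  fun_prop

lemma cut_continuousOn (d n : ℕ) : ContinuousOn (cut (d := d) n) {0}ᶜ := by
  have h : ContinuousOn (fun x : Ed d => (max 0 (cutH n x)) ^ 2) {0}ᶜ := by
    have := cutH_continuousOn d n
    fun_prop
  exact h.congr fun x hx => if_neg hx

lemma cutD_continuousOn {d : ℕ} (n : ℕ) (j : Fin d) : ContinuousOn (cutD n j) {0}ᶜ := by
  have h : ContinuousOn (fun x : Ed d => 2 * max 0 (cutH n x) *
      (-(2 * x j - 2 * x j * ((‖x‖ ^ 2)⁻¹) ^ 2) / ((n : ℝ) + 1) ^ 2)) {0}ᶜ := by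
    have := cutH_continuousOn d n
    have h2 : ContinuousOn (fun x : Ed d => (‖x‖ ^ 2)⁻¹) {0}ᶜ := by
      refine ContinuousOn.inv₀ (by fun_prop) fun x hx => ?_
      have : 0 < ‖x‖ := norm_pos_iff.2 hx
      positivity
    fun_prop
  exact h.congr fun x hx => if_neg hx

lemma cut_hasLineDerivAt {d : ℕ} (n : ℕ) (j : Fin d) (x : Ed d) :
    HasLineDerivAt ℝ (cut n) (cutD n j x) x (bv j) := by
  by_cases hx : x = 0
  · have h0 : cut (d := d) n =ᶠ[𝓝 x] fun _ => 0 := by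
      have : (cutK d n)ᶜ ∈ 𝓝 x :=
        (cutK_compact d n).isClosed.isOpen_compl.mem_nhds fun h => cutK_ne h hx
      filter_upwards [this] with y hy using cut_zero_off hy
    have h1 : HasLineDerivAt ℝ (fun _ : Ed d => (0 : ℝ)) 0 x (bv j) := hasDerivAt_const _ _
    have h2 := h1.congr_of_eventuallyEq h0
    simpa [cutD, hx] using h2
  · have h0 : cut (d := d) n =ᶠ[𝓝 x] fun y => (max 0 (cutH n y)) ^ 2 := by
      filter_upwards [isOpen_compl_singleton.mem_nhds hx] with y hy using if_neg hy
    refine HasLineDerivAt.congr_of_eventuallyEq ?_ h0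
    have hr : 0 < ‖x‖ := norm_pos_iff.2 hx
    have h1 : HasDerivAt (fun t : ℝ => ‖x + t • bv j‖ ^ 2) (2 * x j) 0 := lineDeriv_normSq x j
    have h2 := (h1.add (h1.inv (by simp; exact hx))).div_const (((n : ℝ) + 1) ^ 2)
    have h3 := h2.const_sub 1
    have h4 := (hasDerivAt_posPart_sq (cutH n (x + (0:ℝ) • bv j))).comp (0:ℝ) h3
    have h5 : HasDerivAt (fun t : ℝ => (max 0 (cutH n (x + t • bv j))) ^ 2) _ 0 := h4
    refine HasDerivAt.congr_deriv h5 ?_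
    rw [zero_smul, add_zero, cutD, if_neg hx]
    ring

lemma cutD_bound {d : ℕ} (n : ℕ) (j : Fin d) (x : Ed d) :
    |cutD n j x| ≤ 4 * (‖x‖ + (‖x‖ ^ 3)⁻¹) / ((n : ℝ) + 1) ^ 2 := by
  unfold cutD
  split_ifs with h
  · simp; positivity
  have hr : 0 < ‖x‖ := norm_pos_iff.2 h
  have h1 : cutH n x ≤ 1 := by unfold cutH; rw [sub_le_self_iff]; positivity
  have h2 : |max 0 (cutH n x)| ≤ 1 := by
    rw [abs_of_nonneg (le_max_left _ _)]; exact max_le zero_le_one h1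
  have hxj : |x j| ≤ ‖x‖ := by simpa using PiLp.norm_apply_le x j
  have h3 : |x j - x j * ((‖x‖ ^ 2)⁻¹) ^ 2| ≤ ‖x‖ + (‖x‖ ^ 3)⁻¹ := by
    calc _ ≤ |x j| + |x j * ((‖x‖ ^ 2)⁻¹) ^ 2| := abs_sub _ _
      _ = |x j| + |x j| * ((‖x‖ ^ 2)⁻¹) ^ 2 := by
          rw [abs_mul, abs_of_nonneg (a := ((‖x‖ ^ 2)⁻¹) ^ 2) (by positivity)]
      _ ≤ ‖x‖ + ‖x‖ * ((‖x‖ ^ 2)⁻¹) ^ 2 := by gcongr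
      _ = _ := by field_simp
  have e : 2 * max 0 (cutH n x) * (-(2 * x j - 2 * x j * ((‖x‖ ^ 2)⁻¹) ^ 2) / ((n : ℝ) + 1) ^ 2)
      = max 0 (cutH n x) * (-(4 * (x j - x j * ((‖x‖ ^ 2)⁻¹) ^ 2)) / ((n : ℝ) + 1) ^ 2) := by ring
  rw [e, abs_mul, abs_div, abs_neg, abs_mul, abs_of_pos (a := (4:ℝ)) (by norm_num),
    abs_of_nonneg (a := ((n : ℝ) + 1) ^ 2) (by positivity)]
  calc _ ≤ 1 * (4 * (‖x‖ + (‖x‖ ^ 3)⁻¹) / ((n : ℝ) + 1) ^ 2) := by gcongr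
    _ = _ := one_mul _

lemma cutD_bound' {d : ℕ} (n : ℕ) (j : Fin d) (x : Ed d) :
    |cutD n j x| ≤ 4 * (1 + ‖x‖⁻¹) := by
  by_cases hx : x ∈ cutK d n
  · refine (cutD_bound n j x).trans ?_
    have hr : 0 < ‖x‖ := norm_pos_iff.2 (cutK_ne hx)
    have hn : (1 : ℝ) ≤ (n : ℝ) + 1 := by simp
    have h2 := hx.2
    have h1 : ‖x‖⁻¹ ≤ (n : ℝ) + 1 := inv_le_of_inv_le₀ (by positivity) hx.1
    rw [div_le_iff₀ (by positivity), mul_assoc]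
    have h3 : (‖x‖ ^ 3)⁻¹ ≤ ‖x‖⁻¹ * ((n : ℝ) + 1) ^ 2 := by
      calc (‖x‖ ^ 3)⁻¹ = ‖x‖⁻¹ * (‖x‖⁻¹) ^ 2 := by rw [← inv_pow]; ring
        _ ≤ _ := by gcongr
    nlinarith
  · rw [cutD_zero_off hx, abs_zero]; positivity

lemma tendsto_inv_sq : Tendsto (fun n : ℕ => ((((n : ℝ) + 1) ^ 2)⁻¹)) atTop (𝓝 0) := by
  have h := tendsto_one_div_add_atTop_nhds_zero_nat (𝕜 := ℝ)
  have := h.pow 2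
  simpa using this

lemma cut_tendsto {d : ℕ} {x : Ed d} (hx : x ≠ 0) :
    Tendsto (fun n => cut n x) atTop (𝓝 1) := by
  have h1 : Tendsto (fun n => cutH n x) atTop (𝓝 1) := by
    have := (tendsto_inv_sq.const_mul (‖x‖ ^ 2 + (‖x‖ ^ 2)⁻¹)).const_sub 1
    simpa [cutH, div_eq_mul_inv] using this
  have h2 := ((tendsto_const_nhds (x := (0:ℝ))).max h1).pow 2
  simpa [cut, hx] using h2

lemma cutD_tendsto {d : ℕ} (j : Fin d) (x : Ed d) :
    Tendsto (fun n => cutD n j x) atTop (𝓝 0) := by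
  refine squeeze_zero_norm (fun n => cutD_bound n j x) ?_
  simpa [div_eq_mul_inv] using tendsto_inv_sq.const_mul (4 * (‖x‖ + (‖x‖ ^ 3)⁻¹))

lemma integrable_of_cutK {d n : ℕ} {G : Ed d → ℝ} (hG : ContinuousOn G {0}ᶜ)
    (h0 : ∀ x ∉ cutK d n, G x = 0) : Integrable G := by
  have h1 : IntegrableOn G (cutK d n) :=
    (hG.mono fun x hx => cutK_ne hx).integrableOn_compact (cutK_compact d n)
  exact h1.integrable_of_forall_notMem_eq_zero h0

lemma ae_ne_zero {d : ℕ} (hd : 0 < d) : ∀ᵐ x : Ed d, x ≠ 0 := by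
  have : Nonempty (Fin d) := ⟨⟨0, hd⟩⟩
  have : Nontrivial (Ed d) := inferInstance
  exact Measure.ae_ne volume 0

lemma aesm_of_continuousOn {d : ℕ} (hd : 0 < d) {F : Type*} [NormedAddCommGroup F]
    [NormedSpace ℝ F] [SecondCountableTopology F] {G : Ed d → F}
    (hG : ContinuousOn G {0}ᶜ) : AEStronglyMeasurable G := by
  have h1 := hG.aestronglyMeasurable (μ := volume) (measurableSet_singleton (0 : Ed d)).compl
  rwa [Measure.restrict_eq_self_of_ae_mem] at h1
  exact ae_ne_zero hd

/-- Integrated against the cutoffs, the divergence of a field `F`, `C¹` off the origin and such that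
`(1 + 1/‖x‖) |F|` is integrable, tends to zero. -/
lemma tendsto_cut_div {d : ℕ} (hd : 0 < d) {F F' : Fin d → Ed d → ℝ} {H : Ed d → ℝ}
    (hF : ∀ j, ContinuousOn (F j) {0}ᶜ) (hF' : ∀ j, ContinuousOn (F' j) {0}ᶜ)
    (hFF' : ∀ j, ∀ x ≠ 0, HasLineDerivAt ℝ (F j) (F' j x) x (bv j))
    (hH : Integrable H) (hb : ∀ j, ∀ x ≠ 0, |F j x| * (1 + ‖x‖⁻¹) ≤ H x) :
    Tendsto (fun n => ∫ x, cut n x * ∑ j, F' j x) atTop (𝓝 0) := by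
  have hi1 : ∀ n j, Integrable (fun x => cut n x * F' j x) := fun n j =>
    integrable_of_cutK (n := n) ((cut_continuousOn d n).mul (hF' j)) fun x hx => by
      simp [cut_zero_off hx]
  have hi2 : ∀ n j, Integrable (fun x => cut n x * F j x) := fun n j =>
    integrable_of_cutK (n := n) ((cut_continuousOn d n).mul (hF j)) fun x hx => by
      simp [cut_zero_off hx]
  have hi3 : ∀ n j, Integrable (fun x => cutD n j x * F j x) := fun n j =>
    integrable_of_cutK (n := n) ((cutD_continuousOn n j).mul (hF j)) fun x hx => by
      simp [cutD_zero_off hx]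
  have key : ∀ n, ∫ x, cut n x * ∑ j, F' j x = ∑ j, -∫ x, cutD n j x * F j x := by
    intro n
    simp_rw [Finset.mul_sum]
    rw [integral_finsetSum _ fun j _ => hi1 n j]
    refine Finset.sum_congr rfl fun j _ => ?_
    exact integral_bilinear_hasLineDerivAt_right_eq_neg_left_of_integrable
      (B := ContinuousLinearMap.mul ℝ ℝ) (v := bv j) (hi3 n j) (hi1 n j) (hi2 n j)
      (fun x _ => cut_hasLineDerivAt n j x)
      (fun x hx => hFF' j x (cutK_ne (cut_tsupport d n hx)))
  simp_rw [key]
  rw [show (0 : ℝ) = ∑ _j : Fin d, -∫ _x : Ed d, (0 : ℝ) by simp]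
  refine tendsto_finsetSum _ fun j _ => Tendsto.neg ?_
  refine tendsto_integral_of_dominated_convergence (fun x => 4 * H x) (fun n => (hi3 n j).1)
    (hH.const_mul 4) (fun n => ?_) ?_
  · filter_upwards [ae_ne_zero hd] with x hx
    rw [Real.norm_eq_abs, abs_mul]
    calc _ ≤ 4 * (1 + ‖x‖⁻¹) * |F j x| := by gcongr; exact cutD_bound' n j x
      _ = 4 * (|F j x| * (1 + ‖x‖⁻¹)) := by ring
      _ ≤ _ := by gcongr; exact hb j x hx
  · filter_upwards with x
    simpa using (cutD_tendsto j x).mul_const (F j x)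

/-- If `div F = A - B` with `A ≥ 0` and `B` integrable, then `∫ A ≤ ∫ B`. -/
lemma lintegral_le_of_div {d : ℕ} (hd : 0 < d) {F F' : Fin d → Ed d → ℝ} {H A B : Ed d → ℝ}
    (hF : ∀ j, ContinuousOn (F j) {0}ᶜ) (hF' : ∀ j, ContinuousOn (F' j) {0}ᶜ)
    (hFF' : ∀ j, ∀ x ≠ 0, HasLineDerivAt ℝ (F j) (F' j x) x (bv j))
    (hH : Integrable H) (hb : ∀ j, ∀ x ≠ 0, |F j x| * (1 + ‖x‖⁻¹) ≤ H x)
    (hA : ∀ x ≠ 0, 0 ≤ A x) (hB : Integrable B) (hdiv : ∀ x ≠ 0, ∑ j, F' j x = A x - B x) :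
    ∫⁻ x, ENNReal.ofReal (A x) ≤ ENNReal.ofReal (∫ x, B x) := by
  have h1 := tendsto_cut_div hd hF hF' hFF' hH hb
  have hcm : ∀ n, AEStronglyMeasurable (cut (d := d) n) := fun n =>
    aesm_of_continuousOn hd (cut_continuousOn d n)
  have hiB : ∀ n, Integrable (fun x => cut n x * B x) := fun n =>
    hB.bdd_mul (c := 1) (hcm n) (Eventually.of_forall fun x => by
      rw [Real.norm_eq_abs, abs_of_nonneg (cut_nonneg n x)]; exact cut_le_one n x)
  have hiF : ∀ n, Integrable (fun x => cut n x * ∑ j, F' j x) := fun n =>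
    integrable_of_cutK (n := n) ((cut_continuousOn d n).mul (by
      exact continuousOn_finsetSum _ fun j _ => hF' j)) fun x hx => by simp [cut_zero_off hx]
  have h2 : Tendsto (fun n => ∫ x, cut n x * B x) atTop (𝓝 (∫ x, B x)) := by
    refine tendsto_integral_of_dominated_convergence (fun x => ‖B x‖) (fun n => (hiB n).1)
      hB.norm (fun n => ?_) ?_
    · filter_upwards with x
      rw [norm_mul, Real.norm_eq_abs, abs_of_nonneg (cut_nonneg n x)]
      exact mul_le_of_le_one_left (norm_nonneg _) (cut_le_one n x)
    · filter_upwards [ae_ne_zero hd] with x hx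
      simpa using (cut_tendsto hx).mul_const (B x)
  have hAe : ∀ n, (fun x => cut n x * A x) =ᵐ[volume]
      fun x => cut n x * ∑ j, F' j x + cut n x * B x := fun n => by
    filter_upwards [ae_ne_zero hd] with x hx
    rw [hdiv x hx]; ring
  have hiA : ∀ n, Integrable (fun x => cut n x * A x) := fun n =>
    ((hiF n).add (hiB n)).congr (hAe n).symm
  have h3 : Tendsto (fun n => ∫ x, cut n x * A x) atTop (𝓝 (∫ x, B x)) := by
    have := h1.add h2
    rw [zero_add] at this
    refine this.congr fun n => ?_
    rw [integral_congr_ae (hAe n), integral_add (hiF n) (hiB n)]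
  have h4 : ∀ n, ∫⁻ x, ENNReal.ofReal (cut n x * A x) = ENNReal.ofReal (∫ x, cut n x * A x) := by
    intro n
    rw [ofReal_integral_eq_lintegral_ofReal (hiA n)]
    filter_upwards [ae_ne_zero hd] with x hx using mul_nonneg (cut_nonneg n x) (hA x hx)
  have h5 : ∫⁻ x, ENNReal.ofReal (A x)
      = ∫⁻ x, liminf (fun n => ENNReal.ofReal (cut n x * A x)) atTop := by
    refine lintegral_congr_ae ?_
    filter_upwards [ae_ne_zero hd] with x hx
    have : Tendsto (fun n => ENNReal.ofReal (cut n x * A x)) atTop (𝓝 (ENNReal.ofReal (A x))) := by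
      refine ENNReal.tendsto_ofReal ?_
      simpa using (cut_tendsto hx).mul_const (A x)
    exact this.liminf_eq.symm
  rw [h5]
  refine (lintegral_liminf_le' fun n => (hiA n).1.aemeasurable.ennreal_ofReal).trans ?_
  simp_rw [h4]
  exact (ENNReal.tendsto_ofReal h3).liminf_eq.le

/-! ### The Morawetz identity -/

/-- `v1` and `v2` are the first and second partial derivatives of the `C²` function `v`. -/
structure C2Data {d : ℕ} (v : Ed d → ℝ) (v1 : Fin d → Ed d → ℝ)
    (v2 : Fin d → Fin d → Ed d → ℝ) : Prop where
  d1 : ∀ j x, HasLineDerivAt ℝ v (v1 j x) x (bv j)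
  d2 : ∀ i j x, HasLineDerivAt ℝ (v1 i) (v2 i j x) x (bv j)
  symm : ∀ i j x, v2 i j x = v2 j i x
  c0 : Continuous v
  c1 : ∀ i, Continuous (v1 i)
  c2 : ∀ i j, Continuous (v2 i j)

/-- `1 / ψ` for the Morawetz weight `ψ x = √(a² + ‖x‖²)`; hence `∇ψ = rho a x • x`. -/
def rho {d : ℕ} (a : ℝ) (x : Ed d) : ℝ := (Real.sqrt (a ^ 2 + ‖x‖ ^ 2))⁻¹

/-- The Laplacian of the weight `ψ`. -/
def wL {d : ℕ} (a : ℝ) (x : Ed d) : ℝ := ((d : ℝ) - 1) * rho a x + a ^ 2 * rho a x ^ 3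

/-- The scalar `ℓ` with `∇Δψ = ℓ • x`. -/
def wl {d : ℕ} (a : ℝ) (x : Ed d) : ℝ := -(((d : ℝ) - 1) * rho a x ^ 3 + 3 * a ^ 2 * rho a x ^ 5)

/-- Minus the bi-Laplacian of the weight `ψ`. -/
def wM {d : ℕ} (a : ℝ) (x : Ed d) : ℝ :=
  ((d : ℝ) - 1) * (d - 3) * rho a x ^ 3 + 6 * a ^ 2 * (d - 3) * rho a x ^ 5
    + 15 * a ^ 4 * rho a x ^ 7

/-- `x · ∇v`, given the gradient of `v`. -/
def xgrad {d : ℕ} (v1 : Fin d → Ed d → ℝ) (x : Ed d) : ℝ := ∑ i, x i * v1 i x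

/-- `|∇v|²`, given the gradient of `v`. -/
def gsq {d : ℕ} (v1 : Fin d → Ed d → ℝ) (x : Ed d) : ℝ := ∑ i, v1 i x ^ 2

lemma rho_pos {d : ℕ} {a : ℝ} (ha : 0 < a) (x : Ed d) : 0 < rho a x := by
  unfold rho; positivity

lemma rho_sq {d : ℕ} {a : ℝ} (ha : 0 < a) (x : Ed d) : rho a x ^ 2 * (a ^ 2 + ‖x‖ ^ 2) = 1 := by
  unfold rho
  rw [inv_pow, Real.sq_sqrt (by positivity)]
  exact inv_mul_cancel₀ (by positivity)

lemma rho_continuous {d : ℕ} {a : ℝ} (ha : 0 < a) : Continuous (rho (d := d) a) := by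
  unfold rho
  refine Continuous.inv₀ (by fun_prop) fun x => ?_
  positivity

lemma rho_le {d : ℕ} {a : ℝ} (ha : 0 < a) (x : Ed d) : rho a x ≤ a⁻¹ := by
  unfold rho
  refine inv_anti₀ ha (Real.le_sqrt_of_sq_le ?_)
  nlinarith [sq_nonneg ‖x‖]

lemma rho_mul_norm_le {d : ℕ} {a : ℝ} (ha : 0 < a) (x : Ed d) : rho a x * ‖x‖ ≤ 1 := by
  have h1 := rho_sq ha x
  have h2 : (rho a x * ‖x‖) ^ 2 ≤ 1 ^ 2 := by nlinarith [sq_nonneg (rho a x * a)]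
  exact (le_abs_self _).trans (abs_le_of_sq_le_sq h2 zero_le_one)

lemma rho_mul_a_le {d : ℕ} {a : ℝ} (ha : 0 < a) (x : Ed d) : rho a x ^ 2 * a ^ 2 ≤ 1 := by
  have h1 := rho_sq ha x
  nlinarith [sq_nonneg (rho a x * ‖x‖)]

lemma sum_sq_eq {d : ℕ} (x : Ed d) : ∑ i, x i ^ 2 = ‖x‖ ^ 2 := by
  rw [EuclideanSpace.norm_sq_eq]; simp

lemma rho_deriv {d : ℕ} {a : ℝ} (ha : 0 < a) (x : Ed d) (j : Fin d) :
    HasLineDerivAt ℝ (rho a) (-(x j * rho a x ^ 3)) x (bv j) := by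
  have h1 : HasDerivAt (fun t : ℝ => ‖x + t • bv j‖ ^ 2) (2 * x j) 0 := lineDeriv_normSq x j
  have hp : 0 < a ^ 2 + ‖x‖ ^ 2 := by positivity
  have h2 := ((h1.const_add (a ^ 2)).sqrt (by simpa using hp.ne')).inv
    (by simpa using (Real.sqrt_pos.2 hp).ne')
  refine HasDerivAt.congr_deriv h2 ?_
  rw [zero_smul, add_zero, rho]
  have : Real.sqrt (a ^ 2 + ‖x‖ ^ 2) ≠ 0 := (Real.sqrt_pos.2 hp).ne'
  field_simp

/-- The current of the Morawetz identity for `-Δv + (V - τ) v = g`, with multiplier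
`∇ψ·∇v + ½ Δψ v`. -/
def morF {d : ℕ} (a τ : ℝ) (V : Ed d → ℝ) (v : Ed d → ℝ) (v1 : Fin d → Ed d → ℝ) (j : Fin d)
    (x : Ed d) : ℝ :=
  rho a x * xgrad v1 x * v1 j x - 1 / 2 * (x j * rho a x * gsq v1 x)
    + 1 / 2 * (wL a x * v x * v1 j x) - 1 / 4 * (x j * wl a x * v x ^ 2)
    - 1 / 2 * ((V x - τ) * (x j * rho a x) * v x ^ 2)

/-- The `j`-th partial derivative of `morF j`. -/
def morF' {d : ℕ} (a τ : ℝ) (V : Ed d → ℝ) (V1 : Fin d → Ed d → ℝ) (v : Ed d → ℝ)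
    (v1 : Fin d → Ed d → ℝ) (v2 : Fin d → Fin d → Ed d → ℝ) (j : Fin d) (x : Ed d) : ℝ :=
  (-(x j * rho a x ^ 3) * xgrad v1 x + rho a x * (v1 j x + ∑ i, x i * v2 i j x)) * v1 j x
    + rho a x * xgrad v1 x * v2 j j x
    - 1 / 2 * ((rho a x - x j ^ 2 * rho a x ^ 3) * gsq v1 x
      + x j * rho a x * (2 * ∑ i, v1 i x * v2 i j x))
    + 1 / 2 * ((x j * wl a x * v x + wL a x * v1 j x) * v1 j x + wL a x * v x * v2 j j x)
    - 1 / 4 * ((wl a x + x j ^ 2 * (3 * ((d : ℝ) - 1) * rho a x ^ 5 + 15 * a ^ 2 * rho a x ^ 7))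
        * v x ^ 2 + x j * wl a x * (2 * v x * v1 j x))
    - 1 / 2 * ((V1 j x * (x j * rho a x) + (V x - τ) * (rho a x - x j ^ 2 * rho a x ^ 3)) * v x ^ 2
      + (V x - τ) * (x j * rho a x) * (2 * v x * v1 j x))

lemma xgrad_deriv {d : ℕ} {v : Ed d → ℝ} {v1 v2} (hv : C2Data v v1 v2) (x : Ed d) (j : Fin d) :
    HasLineDerivAt ℝ (xgrad v1) (v1 j x + ∑ i, x i * v2 i j x) x (bv j) := by
  have h : ∀ i ∈ (Finset.univ : Finset (Fin d)),
      HasDerivAt (fun t : ℝ => (x + t • bv j) i * v1 i (x + t • bv j))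
        ((if i = j then 1 else 0) * v1 i x + x i * v2 i j x) 0 := by
    intro i _
    have h1 : HasDerivAt (fun t : ℝ => (x + t • bv j) i) (if i = j then 1 else 0) 0 :=
      lineDeriv_coord x i j
    have h2 : HasDerivAt (fun t : ℝ => v1 i (x + t • bv j)) (v2 i j x) 0 := hv.d2 i j x
    refine HasDerivAt.congr_deriv (h1.mul h2) ?_
    simp only [zero_smul, add_zero]
  refine HasDerivAt.congr_deriv (HasDerivAt.fun_sum h) ?_
  rw [Finset.sum_add_distrib]
  simp

lemma gsq_deriv {d : ℕ} {v : Ed d → ℝ} {v1 v2} (hv : C2Data v v1 v2) (x : Ed d) (j : Fin d) :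
    HasLineDerivAt ℝ (gsq v1) (2 * ∑ i, v1 i x * v2 i j x) x (bv j) := by
  have h : ∀ i ∈ (Finset.univ : Finset (Fin d)),
      HasDerivAt (fun t : ℝ => v1 i (x + t • bv j) ^ 2) (2 * (v1 i x * v2 i j x)) 0 := by
    intro i _
    have h2 : HasDerivAt (fun t : ℝ => v1 i (x + t • bv j)) (v2 i j x) 0 := hv.d2 i j x
    refine HasDerivAt.congr_deriv (h2.pow 2) ?_
    simp only [zero_smul, add_zero]
    ring
  refine HasDerivAt.congr_deriv (HasDerivAt.fun_sum h) ?_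
  rw [Finset.mul_sum]

lemma morF_deriv {d : ℕ} {a : ℝ} (ha : 0 < a) (τ : ℝ) {V : Ed d → ℝ} {V1 : Fin d → Ed d → ℝ}
    {v : Ed d → ℝ} {v1 v2} (hv : C2Data v v1 v2) (x : Ed d) (j : Fin d)
    (hV : HasLineDerivAt ℝ V (V1 j x) x (bv j)) :
    HasLineDerivAt ℝ (morF a τ V v v1 j) (morF' a τ V V1 v v1 v2 j x) x (bv j) := by
  have hρ : HasDerivAt (fun t : ℝ => rho a (x + t • bv j)) (-(x j * rho a x ^ 3)) 0 :=
    rho_deriv ha x j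
  have hx : HasDerivAt (fun t : ℝ => (x + t • bv j) j) 1 0 := by
    have h := lineDeriv_coord x j j
    rw [if_pos rfl] at h
    exact h
  have hS : HasDerivAt (fun t : ℝ => xgrad v1 (x + t • bv j)) (v1 j x + ∑ i, x i * v2 i j x) 0 :=
    xgrad_deriv hv x j
  have hT : HasDerivAt (fun t : ℝ => gsq v1 (x + t • bv j)) (2 * ∑ i, v1 i x * v2 i j x) 0 :=
    gsq_deriv hv x j
  have hvv : HasDerivAt (fun t : ℝ => v (x + t • bv j)) (v1 j x) 0 := hv.d1 j x
  have hv1 : HasDerivAt (fun t : ℝ => v1 j (x + t • bv j)) (v2 j j x) 0 := hv.d2 j j x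
  have hVV : HasDerivAt (fun t : ℝ => V (x + t • bv j)) (V1 j x) 0 := hV
  have hL : HasDerivAt (fun t : ℝ => wL a (x + t • bv j)) (x j * wl a x) 0 := by
    refine HasDerivAt.congr_deriv
      ((hρ.const_mul ((d : ℝ) - 1)).add ((hρ.pow 3).const_mul (a ^ 2))) ?_
    simp only [zero_smul, add_zero, wl]
    push_cast
    ring
  have hl : HasDerivAt (fun t : ℝ => wl a (x + t • bv j))
      (x j * (3 * ((d : ℝ) - 1) * rho a x ^ 5 + 15 * a ^ 2 * rho a x ^ 7)) 0 := by
    refine HasDerivAt.congr_deriv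
      (((hρ.pow 3).const_mul ((d : ℝ) - 1)).add ((hρ.pow 5).const_mul (3 * a ^ 2))).neg ?_
    simp only [zero_smul, add_zero]
    push_cast
    ring
  refine HasDerivAt.congr_deriv
    ((((((hρ.mul hS).mul hv1).sub (((hx.mul hρ).mul hT).const_mul (1 / 2))).add
      (((hL.mul hvv).mul hv1).const_mul (1 / 2))).sub
      (((hx.mul hl).mul (hvv.pow 2)).const_mul (1 / 4))).sub
      ((((hVV.sub_const τ).mul (hx.mul hρ)).mul (hvv.pow 2)).const_mul (1 / 2))) ?_
  simp only [zero_smul, add_zero, morF', Pi.mul_apply, Pi.pow_apply]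
  push_cast
  ring

/-- The pointwise Morawetz identity. -/
lemma morF'_sum {d : ℕ} {a : ℝ} (ha : 0 < a) (τ : ℝ) (V : Ed d → ℝ) (V1 : Fin d → Ed d → ℝ)
    {v : Ed d → ℝ} {v1 v2} (hv : C2Data v v1 v2) (x : Ed d) :
    ∑ j, morF' a τ V V1 v v1 v2 j x
      = rho a x * gsq v1 x - rho a x ^ 3 * xgrad v1 x ^ 2
        + (rho a x * xgrad v1 x + 1 / 2 * wL a x * v x) * (∑ j, v2 j j x - (V x - τ) * v x)
        + 1 / 4 * wM a x * v x ^ 2 - 1 / 2 * rho a x * (∑ j, x j * V1 j x) * v x ^ 2 := by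
  have hsw : ∑ j, v1 j x * ∑ i, x i * v2 i j x = ∑ j, x j * ∑ i, v1 i x * v2 i j x := by
    simp_rw [Finset.mul_sum]
    rw [Finset.sum_comm]
    refine Finset.sum_congr rfl fun j _ => Finset.sum_congr rfl fun i _ => ?_
    rw [hv.symm j i]; ring
  have e : ∀ j, morF' a τ V V1 v v1 v2 j x =
      (-(rho a x ^ 3 * xgrad v1 x) - (V x - τ) * rho a x * v x) * (x j * v1 j x)
      + (rho a x + 1 / 2 * wL a x) * v1 j x ^ 2
      + rho a x * (v1 j x * ∑ i, x i * v2 i j x)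
      + (rho a x * xgrad v1 x + 1 / 2 * wL a x * v x) * v2 j j x
      + (1 / 2 * rho a x ^ 3 * gsq v1 x
          - 1 / 4 * (3 * ((d : ℝ) - 1) * rho a x ^ 5 + 15 * a ^ 2 * rho a x ^ 7) * v x ^ 2
          + 1 / 2 * (V x - τ) * rho a x ^ 3 * v x ^ 2) * x j ^ 2
      + (-rho a x) * (x j * ∑ i, v1 i x * v2 i j x)
      + (-(1 / 2 * rho a x * v x ^ 2)) * (x j * V1 j x)
      + (-(1 / 2 * rho a x * gsq v1 x) - 1 / 4 * wl a x * v x ^ 2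
          - 1 / 2 * (V x - τ) * rho a x * v x ^ 2) := by
    intro j; unfold morF'; ring
  simp_rw [e]
  simp only [Finset.sum_add_distrib, ← Finset.mul_sum]
  rw [hsw, sum_sq_eq, Finset.sum_const, Finset.card_univ, Fintype.card_fin, nsmul_eq_mul]
  change _ * xgrad v1 x + _ * gsq v1 x + _ + _ + _ + _ + _ + _ = _
  have hρ := rho_sq ha x
  have e3 : rho a x ^ 3 * ‖x‖ ^ 2 = rho a x - a ^ 2 * rho a x ^ 3 := by
    linear_combination rho a x * hρ
  have e5 : rho a x ^ 5 * ‖x‖ ^ 2 = rho a x ^ 3 - a ^ 2 * rho a x ^ 5 := by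
    linear_combination rho a x ^ 3 * hρ
  have e7 : rho a x ^ 7 * ‖x‖ ^ 2 = rho a x ^ 5 - a ^ 2 * rho a x ^ 7 := by
    linear_combination rho a x ^ 5 * hρ
  unfold wL wl wM
  linear_combination (1 / 2 * gsq v1 x + 1 / 2 * (V x - τ) * v x ^ 2) * e3
    - 1 / 4 * 3 * ((d : ℝ) - 1) * v x ^ 2 * e5 - 1 / 4 * 15 * a ^ 2 * v x ^ 2 * e7

/-! ### Bounds on the Morawetz flux -/

lemma gsq_nonneg {d : ℕ} (v1 : Fin d → Ed d → ℝ) (x : Ed d) : 0 ≤ gsq v1 x :=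
  Finset.sum_nonneg fun _ _ => sq_nonneg _

lemma xgrad_sq_le {d : ℕ} (v1 : Fin d → Ed d → ℝ) (x : Ed d) :
    xgrad v1 x ^ 2 ≤ ‖x‖ ^ 2 * gsq v1 x := by
  rw [← sum_sq_eq]
  exact Finset.sum_mul_sq_le_sq_mul_sq _ _ _

lemma sq_le_gsq {d : ℕ} (v1 : Fin d → Ed d → ℝ) (x : Ed d) (j : Fin d) :
    v1 j x ^ 2 ≤ gsq v1 x :=
  Finset.single_le_sum (f := fun i => v1 i x ^ 2) (fun _ _ => sq_nonneg _) (Finset.mem_univ j)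

lemma abs_coord_le {d : ℕ} (x : Ed d) (j : Fin d) : |x j| ≤ ‖x‖ := by
  simpa using PiLp.norm_apply_le x j

/-- The common dominating density of the currents attached to a component `v` of the solution. -/
def domH {d : ℕ} (v : Ed d → ℝ) (v1 : Fin d → Ed d → ℝ) (x : Ed d) : ℝ :=
  gsq v1 x + v x ^ 2 + v x ^ 2 * (‖x‖ ^ 3)⁻¹

lemma inv_sq_le {r : ℝ} (hr : 0 < r) : r⁻¹ ^ 2 ≤ 1 + (r ^ 3)⁻¹ := by
  rw [← inv_pow]
  have : 0 < r⁻¹ := by positivity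
  set t := r⁻¹
  rcases le_total t 1 with h | h
  · nlinarith [pow_pos this 3]
  · nlinarith [pow_pos this 2]

lemma mul_abs_le {r : ℝ} (hr : 0 < r) {y z Y Z : ℝ} (hy : y ^ 2 ≤ Y) (hz : z ^ 2 ≤ Z) :
    |y * z| * (1 + r⁻¹) ≤ Z + Y + Y * (r ^ 3)⁻¹ := by
  have h1 := inv_sq_le hr
  rw [abs_mul]
  rw [← sq_abs y] at hy
  rw [← sq_abs z] at hz
  have hY : 0 ≤ Y := (sq_nonneg _).trans hy
  have h2 : |y| ^ 2 * r⁻¹ ^ 2 ≤ Y * (1 + (r ^ 3)⁻¹) := by gcongr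
  have h3 : 0 ≤ Y * (r ^ 3)⁻¹ := by positivity
  nlinarith [sq_nonneg (|y| - |z|), sq_nonneg (|y| * r⁻¹ - |z|)]

set_option maxHeartbeats 800000 in
lemma morF_bound {d : ℕ} (hd : 0 < d) {a : ℝ} (ha : 0 < a) (τ : ℝ) {V : Ed d → ℝ}
    (hV : ∀ x, 0 ≤ V x)
    (v : Ed d → ℝ) (v1 : Fin d → Ed d → ℝ) (j : Fin d) {x : Ed d} (hx : x ≠ 0) :
    |morF a τ V v v1 j x| * (1 + ‖x‖⁻¹) ≤
      ((2 + d * a⁻¹ + (d + 2) * a⁻¹ ^ 2 + |τ|) * (1 + a⁻¹)) * (domH v v1 x * (1 + a⁻¹) + V x * v x ^ 2) := by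
  have hr : 0 < ‖x‖ := norm_pos_iff.2 hx
  have hρ := rho_pos ha x
  have hρa := rho_le ha x
  have hρr := rho_mul_norm_le ha x
  have hρ2 := rho_mul_a_le ha x
  have ha' : 0 < a⁻¹ := by positivity
  have hd1 : (1 : ℝ) ≤ d := by exact_mod_cast hd
  have hT := gsq_nonneg v1 x
  have hVx := hV x
  set ρ := rho a x with hρdef
  set r := ‖x‖ with hrdef
  set b := a⁻¹ with hb
  -- `ρ r (1 + 1/r)` is bounded by `1 + 1/a`, which absorbs the singular factor
  have hk : ρ * r * (1 + r⁻¹) ≤ 1 + b := by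
    have : ρ * r * (1 + r⁻¹) = ρ * r + ρ := by field_simp
    linarith
  have hp : 0 ≤ 1 + r⁻¹ := by positivity
  have hxj := abs_coord_le x j
  have hS : |xgrad v1 x * v1 j x| ≤ r * gsq v1 x := by
    refine abs_le_of_sq_le_sq ?_ (by positivity)
    have h1 := xgrad_sq_le v1 x
    have h2 := sq_le_gsq v1 x j
    calc (xgrad v1 x * v1 j x) ^ 2 = xgrad v1 x ^ 2 * v1 j x ^ 2 := by ring
      _ ≤ (r ^ 2 * gsq v1 x) * gsq v1 x := by gcongr
      _ = _ := by ring
  have t1 : |ρ * xgrad v1 x * v1 j x| * (1 + r⁻¹) ≤ (1 + b) * gsq v1 x := by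
    rw [mul_assoc, abs_mul, abs_of_pos hρ]
    calc ρ * |xgrad v1 x * v1 j x| * (1 + r⁻¹) ≤ ρ * (r * gsq v1 x) * (1 + r⁻¹) := by gcongr
      _ = ρ * r * (1 + r⁻¹) * gsq v1 x := by ring
      _ ≤ _ := by gcongr
  have hxρ : |x j * ρ| * (1 + r⁻¹) ≤ 1 + b := by
    rw [abs_mul, abs_of_pos hρ]
    calc |x j| * ρ * (1 + r⁻¹) ≤ r * ρ * (1 + r⁻¹) := by gcongr
      _ = ρ * r * (1 + r⁻¹) := by ring
      _ ≤ _ := hk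
  have t2 : |x j * ρ * gsq v1 x| * (1 + r⁻¹) ≤ (1 + b) * gsq v1 x := by
    rw [abs_mul, abs_of_nonneg hT]
    calc |x j * ρ| * gsq v1 x * (1 + r⁻¹) = |x j * ρ| * (1 + r⁻¹) * gsq v1 x := by ring
      _ ≤ _ := by gcongr
  have hL0 : 0 ≤ wL a x := by
    unfold wL
    have : 0 ≤ (d : ℝ) - 1 := by linarith
    rw [← hρdef]
    positivity
  have hL : wL a x ≤ d * b := by
    unfold wL
    rw [← hρdef]
    calc ((d : ℝ) - 1) * ρ + a ^ 2 * ρ ^ 3 = ((d : ℝ) - 1) * ρ + (ρ ^ 2 * a ^ 2) * ρ := by ring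
      _ ≤ ((d : ℝ) - 1) * ρ + 1 * ρ := by gcongr
      _ = d * ρ := by ring
      _ ≤ _ := by gcongr
  have t3 : |wL a x * v x * v1 j x| * (1 + r⁻¹) ≤ d * b * domH v v1 x := by
    rw [mul_assoc, abs_mul, abs_of_nonneg hL0, mul_assoc]
    gcongr
    exact mul_abs_le hr le_rfl (sq_le_gsq v1 x j)
  have hl : |wl a x| ≤ (d + 2) * b ^ 2 * ρ := by
    have h0 : 0 ≤ (d : ℝ) - 1 := by linarith
    unfold wl
    rw [← hρdef, abs_neg, abs_of_nonneg (by positivity)]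
    calc ((d : ℝ) - 1) * ρ ^ 3 + 3 * a ^ 2 * ρ ^ 5
        = ((d : ℝ) - 1) * ρ ^ 3 + 3 * (ρ ^ 2 * a ^ 2) * ρ ^ 3 := by ring
      _ ≤ ((d : ℝ) - 1) * ρ ^ 3 + 3 * 1 * ρ ^ 3 := by gcongr
      _ = (d + 2) * ρ ^ 2 * ρ := by ring
      _ ≤ _ := by gcongr
  have t4 : |x j * wl a x * v x ^ 2| * (1 + r⁻¹) ≤ (d + 2) * b ^ 2 * (1 + b) * v x ^ 2 := by
    rw [abs_mul, abs_mul, abs_of_nonneg (sq_nonneg (v x))]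
    calc |x j| * |wl a x| * v x ^ 2 * (1 + r⁻¹)
        ≤ r * ((d + 2) * b ^ 2 * ρ) * v x ^ 2 * (1 + r⁻¹) := by gcongr
      _ = (d + 2) * b ^ 2 * (ρ * r * (1 + r⁻¹)) * v x ^ 2 := by ring
      _ ≤ _ := by gcongr
  have t5 : |(V x - τ) * (x j * ρ) * v x ^ 2| * (1 + r⁻¹)
      ≤ (1 + b) * (V x * v x ^ 2 + |τ| * v x ^ 2) := by
    rw [abs_mul, abs_mul, abs_of_nonneg (sq_nonneg (v x))]
    have : |V x - τ| ≤ V x + |τ| := (abs_sub _ _).trans (by rw [abs_of_nonneg hVx])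
    calc |V x - τ| * |x j * ρ| * v x ^ 2 * (1 + r⁻¹)
        = |V x - τ| * (|x j * ρ| * (1 + r⁻¹)) * v x ^ 2 := by ring
      _ ≤ (V x + |τ|) * (1 + b) * v x ^ 2 := by gcongr
      _ = _ := by ring
  have tri : |morF a τ V v v1 j x| ≤ |ρ * xgrad v1 x * v1 j x| + 1 / 2 * |x j * ρ * gsq v1 x|
      + 1 / 2 * |wL a x * v x * v1 j x| + 1 / 4 * |x j * wl a x * v x ^ 2|
      + 1 / 2 * |(V x - τ) * (x j * ρ) * v x ^ 2| := by
    unfold morF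
    rw [← hρdef]
    generalize ρ * xgrad v1 x * v1 j x = A1
    generalize x j * ρ * gsq v1 x = A2
    generalize wL a x * v x * v1 j x = A3
    generalize x j * wl a x * v x ^ 2 = A4
    generalize (V x - τ) * (x j * ρ) * v x ^ 2 = A5
    rw [abs_le]
    constructor <;> linarith [neg_abs_le A1, neg_abs_le A2, neg_abs_le A3, neg_abs_le A4,
      neg_abs_le A5, le_abs_self A1, le_abs_self A2, le_abs_self A3, le_abs_self A4,
      le_abs_self A5]
  have hD1 : gsq v1 x ≤ domH v v1 x := by
    have : 0 ≤ v x ^ 2 + v x ^ 2 * (‖x‖ ^ 3)⁻¹ := by positivity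
    unfold domH; linarith
  have hD2 : v x ^ 2 ≤ domH v v1 x := by
    have : 0 ≤ gsq v1 x + v x ^ 2 * (‖x‖ ^ 3)⁻¹ := by positivity
    unfold domH; linarith
  set D := domH v v1 x
  have hD0 : 0 ≤ D := hT.trans hD1
  have hW : 0 ≤ V x * v x ^ 2 := by positivity
  calc |morF a τ V v v1 j x| * (1 + r⁻¹)
      ≤ (1 + b) * gsq v1 x + 1 / 2 * ((1 + b) * gsq v1 x) + 1 / 2 * (d * b * D)
        + 1 / 4 * ((d + 2) * b ^ 2 * (1 + b) * v x ^ 2)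
        + 1 / 2 * ((1 + b) * (V x * v x ^ 2 + |τ| * v x ^ 2)) := by
        have h0 := mul_le_mul_of_nonneg_right tri hp
        linarith
    _ ≤ (1 + b) * D + 1 / 2 * ((1 + b) * D) + 1 / 2 * (d * b * D)
        + 1 / 4 * ((d + 2) * b ^ 2 * (1 + b) * D)
        + 1 / 2 * ((1 + b) * (V x * v x ^ 2 + |τ| * D)) := by gcongr
    _ ≤ (2 * (1 + b) + d * b * (1 + b) + (d + 2) * b ^ 2 * (1 + b) + |τ| * (1 + b)) * D
        + (1 + b) * (V x * v x ^ 2) := by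
        have h1 : 0 ≤ b * D := by positivity
        have h2 : 0 ≤ d * b * D := by positivity
        have h3 : 0 ≤ d * b * b * D := by positivity
        have h4 : 0 ≤ (d + 2) * b ^ 2 * (1 + b) * D := by positivity
        have h5 : 0 ≤ (1 + b) * (|τ| * D) := by positivity
        have h6 : 0 ≤ (1 + b) * (V x * v x ^ 2) := by positivity
        linarith
    _ = (2 + d * b + (d + 2) * b ^ 2 + |τ|) * (1 + b) * D + 1 * (1 + b) * (V x * v x ^ 2) := by
        ring
    _ ≤ (2 + d * b + (d + 2) * b ^ 2 + |τ|) * (1 + b) * (D * (1 + b))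
        + (2 + d * b + (d + 2) * b ^ 2 + |τ|) * (1 + b) * (V x * v x ^ 2) := by
        have h0 : (1 : ℝ) ≤ 2 + d * b + (d + 2) * b ^ 2 + |τ| := by
          have : 0 ≤ d * b + (d + 2) * b ^ 2 + |τ| := by positivity
          linarith
        have h1 : D ≤ D * (1 + b) := le_mul_of_one_le_right hD0 (by linarith)
        gcongr
    _ = _ := by ring

lemma xgrad_continuous {d : ℕ} {v : Ed d → ℝ} {v1 v2} (hv : C2Data v v1 v2) :
    Continuous (xgrad v1) := by
  have := hv.c1
  unfold xgrad
  fun_prop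

lemma gsq_continuous {d : ℕ} {v : Ed d → ℝ} {v1 v2} (hv : C2Data v v1 v2) :
    Continuous (gsq v1) := by
  have := hv.c1
  unfold gsq
  fun_prop

lemma wL_continuous {d : ℕ} {a : ℝ} (ha : 0 < a) : Continuous (wL (d := d) a) := by
  have := rho_continuous (d := d) ha
  unfold wL
  fun_prop

lemma wl_continuous {d : ℕ} {a : ℝ} (ha : 0 < a) : Continuous (wl (d := d) a) := by
  have := rho_continuous (d := d) ha
  unfold wl
  fun_prop

lemma morF_continuousOn {d : ℕ} {a : ℝ} (ha : 0 < a) (τ : ℝ) {V : Ed d → ℝ}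
    (hV : ContinuousOn V {0}ᶜ) {v : Ed d → ℝ} {v1 v2} (hv : C2Data v v1 v2) (j : Fin d) :
    ContinuousOn (morF a τ V v v1 j) {0}ᶜ := by
  have h1 := xgrad_continuous hv
  have h2 := gsq_continuous hv
  have h3 := hv.c0
  have h4 := hv.c1
  have h5 := rho_continuous (d := d) ha
  have h6 := wL_continuous (d := d) ha
  have h7 := wl_continuous (d := d) ha
  unfold morF
  fun_prop

lemma morF'_continuousOn {d : ℕ} {a : ℝ} (ha : 0 < a) (τ : ℝ) {V : Ed d → ℝ}
    {V1 : Fin d → Ed d → ℝ}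
    (hV : ContinuousOn V {0}ᶜ) (hV1 : ∀ j, ContinuousOn (V1 j) {0}ᶜ)
    {v : Ed d → ℝ} {v1 v2} (hv : C2Data v v1 v2) (j : Fin d) :
    ContinuousOn (morF' a τ V V1 v v1 v2 j) {0}ᶜ := by
  have h1 := xgrad_continuous hv
  have h2 := gsq_continuous hv
  have h3 := hv.c0
  have h4 := hv.c1
  have h4' := hv.c2
  have h5 := rho_continuous (d := d) ha
  have h6 := wL_continuous (d := d) ha
  have h7 := wl_continuous (d := d) ha
  unfold morF'
  fun_prop

/-! ### Energy identities -/

/-- The equation `-Δu + V u + i e u - τ u = f` written for `u = v + i w` and `f = f1 + i f2`,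
together with the repulsivity condition on `V` and the a priori integrability. The arrays `v1`, `v2`,
`w1`, `w2`, `V1` hold partial derivatives. -/
structure Sol {d : ℕ} (V : Ed d → ℝ) (V1 : Fin d → Ed d → ℝ) (τ e κ γ : ℝ)
    (v : Ed d → ℝ) (v1 : Fin d → Ed d → ℝ) (v2 : Fin d → Fin d → Ed d → ℝ)
    (w : Ed d → ℝ) (w1 : Fin d → Ed d → ℝ) (w2 : Fin d → Fin d → Ed d → ℝ)
    (f1 f2 : Ed d → ℝ) : Prop where
  hd : 3 < d
  hγ : 0 < γ
  hκ : 0 ≤ κ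
  hv : C2Data v v1 v2
  hw : C2Data w w1 w2
  V0 : ∀ x, 0 ≤ V x
  Vc : ContinuousOn V {0}ᶜ
  V1c : ∀ j, ContinuousOn (V1 j) {0}ᶜ
  Vd : ∀ j, ∀ x ≠ 0, HasLineDerivAt ℝ V (V1 j x) x (bv j)
  rep : ∀ x ≠ 0, γ * V x + ∑ j, x j * V1 j x ≤ κ * ((d : ℝ) - 1) * (d - 3) / (2 * ‖x‖ ^ 2)
  eq1 : ∀ x, ∑ j, v2 j j x = (V x - τ) * v x - e * w x - f1 x
  eq2 : ∀ x, ∑ j, w2 j j x = (V x - τ) * w x + e * v x - f2 x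
  iu : Integrable fun x => v x ^ 2 + w x ^ 2
  ig : Integrable fun x => gsq v1 x + gsq w1 x
  iff : Integrable fun x => f1 x ^ 2 + f2 x ^ 2
  i3 : Integrable fun x => (v x ^ 2 + w x ^ 2) * (‖x‖ ^ 3)⁻¹

lemma integrable_sqrt_mul {d : ℕ} {P Q : Ed d → ℝ} (hP : Integrable P) (hQ : Integrable Q)
    (hP0 : ∀ x, 0 ≤ P x) (hQ0 : ∀ x, 0 ≤ Q x) :
    Integrable fun x => √(P x) * √(Q x) := by
  refine (hP.add hQ).mono' ?_ (Eventually.of_forall fun x => ?_)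
  · exact (Real.continuous_sqrt.comp_aestronglyMeasurable hP.1).mul
      (Real.continuous_sqrt.comp_aestronglyMeasurable hQ.1)
  · rw [Real.norm_eq_abs, abs_of_nonneg (by positivity), Pi.add_apply]
    nlinarith [Real.sq_sqrt (hP0 x), Real.sq_sqrt (hQ0 x), sq_nonneg (√(P x) - √(Q x)),
      hP0 x, hQ0 x]

/-- Cauchy–Schwarz in the plane. -/
lemma cs2 (a b x y : ℝ) : a * x + b * y ≤ √(a ^ 2 + b ^ 2) * √(x ^ 2 + y ^ 2) := by
  rw [← Real.sqrt_mul (by positivity)]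
  refine Real.le_sqrt_of_sq_le ?_
  nlinarith [sq_nonneg (a * y - b * x)]

lemma cs2_abs (a b x y : ℝ) : |a * x + b * y| ≤ √(a ^ 2 + b ^ 2) * √(x ^ 2 + y ^ 2) := by
  rw [abs_le]
  constructor
  · have := cs2 (-a) (-b) x y
    simp only [neg_sq] at this
    linarith
  · exact cs2 a b x y

/-- The form of `lintegral_le_of_div` in which the source term `B` is merely continuous off the
origin, dominated in absolute value by `D`, and bounded above by `E`. -/
lemma lintegral_le_of_div' {d : ℕ} (hd : 0 < d) {F F' : Fin d → Ed d → ℝ}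
    {H A B D E : Ed d → ℝ}
    (hF : ∀ j, ContinuousOn (F j) {0}ᶜ) (hF' : ∀ j, ContinuousOn (F' j) {0}ᶜ)
    (hFF' : ∀ j, ∀ x ≠ 0, HasLineDerivAt ℝ (F j) (F' j x) x (bv j))
    (hH : Integrable H) (hb : ∀ j, ∀ x ≠ 0, |F j x| * (1 + ‖x‖⁻¹) ≤ H x)
    (hA : ∀ x ≠ 0, 0 ≤ A x) (hB : ContinuousOn B {0}ᶜ) (hD : Integrable D) (hE : Integrable E)
    (hBD : ∀ x ≠ 0, |B x| ≤ D x) (hBE : ∀ x ≠ 0, B x ≤ E x)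
    (hdiv : ∀ x ≠ 0, ∑ j, F' j x = A x - B x) :
    ∫⁻ x, ENNReal.ofReal (A x) ≤ ENNReal.ofReal (∫ x, E x) := by
  have hBi : Integrable B := by
    refine hD.mono' (aesm_of_continuousOn hd hB) ?_
    filter_upwards [ae_ne_zero hd] with x hx using hBD x hx
  refine (lintegral_le_of_div hd hF hF' hFF' hH hb hA hBi hdiv).trans
    (ENNReal.ofReal_le_ofReal (integral_mono_ae hBi hE ?_))
  filter_upwards [ae_ne_zero hd] with x hx using hBE x hx

section
variable {d : ℕ} {V : Ed d → ℝ} {V1 : Fin d → Ed d → ℝ} {τ e κ γ : ℝ}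
    {v : Ed d → ℝ} {v1 : Fin d → Ed d → ℝ} {v2 : Fin d → Fin d → Ed d → ℝ}
    {w : Ed d → ℝ} {w1 : Fin d → Ed d → ℝ} {w2 : Fin d → Fin d → Ed d → ℝ}
    {f1 f2 : Ed d → ℝ}

lemma Sol.d_pos (S : Sol V V1 τ e κ γ v v1 v2 w w1 w2 f1 f2) : 0 < d := by
  have := S.hd; omega

lemma Sol.f1c (S : Sol V V1 τ e κ γ v v1 v2 w w1 w2 f1 f2) : ContinuousOn f1 {0}ᶜ := by
  have h : ContinuousOn (fun x => (V x - τ) * v x - e * w x - ∑ j, v2 j j x) {0}ᶜ := by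
    have h1 := S.Vc
    have h2 := S.hv.c0
    have h3 := S.hw.c0
    have h4 := S.hv.c2
    fun_prop
  exact h.congr fun x _ => by have := S.eq1 x; simp only; linarith

lemma Sol.f2c (S : Sol V V1 τ e κ γ v v1 v2 w w1 w2 f1 f2) : ContinuousOn f2 {0}ᶜ := by
  have h : ContinuousOn (fun x => (V x - τ) * w x + e * v x - ∑ j, w2 j j x) {0}ᶜ := by
    have h1 := S.Vc
    have h2 := S.hv.c0
    have h3 := S.hw.c0
    have h4 := S.hw.c2
    fun_prop
  exact h.congr fun x _ => by have := S.eq2 x; simp only; linarith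

lemma Sol.iH (S : Sol V V1 τ e κ γ v v1 v2 w w1 w2 f1 f2) :
    Integrable fun x => (gsq v1 x + gsq w1 x) + (v x ^ 2 + w x ^ 2)
      + (v x ^ 2 + w x ^ 2) * (‖x‖ ^ 3)⁻¹ :=
  (S.ig.add S.iu).add S.i3

lemma Sol.ifu (S : Sol V V1 τ e κ γ v v1 v2 w w1 w2 f1 f2) :
    Integrable fun x => √(f1 x ^ 2 + f2 x ^ 2) * √(v x ^ 2 + w x ^ 2) :=
  integrable_sqrt_mul S.iff S.iu (fun x => by positivity) fun x => by positivity

lemma Sol.ifg (S : Sol V V1 τ e κ γ v v1 v2 w w1 w2 f1 f2) :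
    Integrable fun x => √(f1 x ^ 2 + f2 x ^ 2) * √(gsq v1 x + gsq w1 x) :=
  integrable_sqrt_mul S.iff S.ig (fun x => by positivity)
    fun x => add_nonneg (gsq_nonneg _ _) (gsq_nonneg _ _)

lemma Sol.iug (S : Sol V V1 τ e κ γ v v1 v2 w w1 w2 f1 f2) :
    Integrable fun x => √(v x ^ 2 + w x ^ 2) * √(gsq v1 x + gsq w1 x) :=
  integrable_sqrt_mul S.iu S.ig (fun x => by positivity)
    fun x => add_nonneg (gsq_nonneg _ _) (gsq_nonneg _ _)

lemma Sol.ifur (S : Sol V V1 τ e κ γ v v1 v2 w w1 w2 f1 f2) :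
    Integrable fun x => √(f1 x ^ 2 + f2 x ^ 2) * √(v x ^ 2 + w x ^ 2) * ‖x‖⁻¹ := by
  refine ((S.iff.add S.iu).add S.i3).mono' (S.ifu.1.mul ?_) ?_
  · exact (measurable_norm.inv).aestronglyMeasurable
  · filter_upwards [ae_ne_zero S.d_pos] with x hx
    have hr : 0 < ‖x‖ := norm_pos_iff.2 hx
    have h1 := inv_sq_le hr
    rw [Real.norm_eq_abs, abs_of_nonneg (by positivity)]
    simp only [Pi.add_apply]
    set p := f1 x ^ 2 + f2 x ^ 2
    set q := v x ^ 2 + w x ^ 2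
    have hp : 0 ≤ p := by positivity
    have hq : 0 ≤ q := by positivity
    have h2 : q * ‖x‖⁻¹ ^ 2 ≤ q * (1 + (‖x‖ ^ 3)⁻¹) := by gcongr
    have h3 : 0 ≤ q * (‖x‖ ^ 3)⁻¹ := by positivity
    have h4 : (√q * ‖x‖⁻¹) ^ 2 = q * ‖x‖⁻¹ ^ 2 := by rw [mul_pow, Real.sq_sqrt hq]
    nlinarith [Real.sq_sqrt hp, sq_nonneg (√p - √q * ‖x‖⁻¹)]

/-- Testing the equation with `u`, imaginary part: `|e| ∫ |u|² ≤ ∫ |f| |u|`. -/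
lemma Sol.energy_im (S : Sol V V1 τ e κ γ v v1 v2 w w1 w2 f1 f2) :
    |e| * ∫ x, (v x ^ 2 + w x ^ 2) ≤
      ∫ x, √(f1 x ^ 2 + f2 x ^ 2) * √(v x ^ 2 + w x ^ 2) := by
  obtain ⟨s, hs, hse⟩ : ∃ s : ℝ, |s| = 1 ∧ s * e = |e| := by
    rcases le_total 0 e with h | h
    · exact ⟨1, by simp, by rw [abs_of_nonneg h, one_mul]⟩
    · exact ⟨-1, by simp, by rw [abs_of_nonpos h]; ring⟩
  have hbd : ∀ x, |s * (v x * f2 x - w x * f1 x)|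
      ≤ √(f1 x ^ 2 + f2 x ^ 2) * √(v x ^ 2 + w x ^ 2) := fun x => by
    rw [abs_mul, hs, one_mul]
    have := cs2_abs (f2 x) (-f1 x) (v x) (w x)
    rw [neg_sq, add_comm (f2 x ^ 2)] at this
    have e1 : v x * f2 x - w x * f1 x = f2 x * v x + -f1 x * w x := by ring
    rwa [e1]
  have h := lintegral_le_of_div' S.d_pos
    (F := fun j x => s * (v x * w1 j x - w x * v1 j x))
    (F' := fun j x => s * (v x * w2 j j x - w x * v2 j j x))
    (A := fun x => |e| * (v x ^ 2 + w x ^ 2))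
    (B := fun x => s * (v x * f2 x - w x * f1 x))
    (fun j => by
      have h1 := S.hv.c0
      have h2 := S.hw.c0
      have h3 := S.hv.c1
      have h4 := S.hw.c1
      fun_prop)
    (fun j => by
      have h1 := S.hv.c0
      have h2 := S.hw.c0
      have h3 := S.hv.c2
      have h4 := S.hw.c2
      fun_prop)
    (fun j x _ => by
      have h1 : HasDerivAt (fun t : ℝ => v (x + t • bv j)) (v1 j x) 0 := S.hv.d1 j x
      have h2 : HasDerivAt (fun t : ℝ => w (x + t • bv j)) (w1 j x) 0 := S.hw.d1 j x
      have h3 : HasDerivAt (fun t : ℝ => v1 j (x + t • bv j)) (v2 j j x) 0 := S.hv.d2 j j x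
      have h4 : HasDerivAt (fun t : ℝ => w1 j (x + t • bv j)) (w2 j j x) 0 := S.hw.d2 j j x
      refine HasDerivAt.congr_deriv (((h1.mul h4).sub (h2.mul h3)).const_mul s) ?_
      simp only [zero_smul, add_zero]
      ring)
    (S.iH.const_mul 2)
    (fun j x hx => by
      have hr : 0 < ‖x‖ := norm_pos_iff.2 hx
      have g1 := sq_le_gsq v1 x j
      have g2 := sq_le_gsq w1 x j
      have m1 := mul_abs_le hr (y := v x) (z := w1 j x) (Y := v x ^ 2 + w x ^ 2)
        (Z := gsq v1 x + gsq w1 x) (by nlinarith) (by linarith [gsq_nonneg v1 x])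
      have m2 := mul_abs_le hr (y := w x) (z := v1 j x) (Y := v x ^ 2 + w x ^ 2)
        (Z := gsq v1 x + gsq w1 x) (by nlinarith) (by linarith [gsq_nonneg w1 x])
      rw [abs_mul, hs, one_mul]
      calc |v x * w1 j x - w x * v1 j x| * (1 + ‖x‖⁻¹)
          ≤ (|v x * w1 j x| + |w x * v1 j x|) * (1 + ‖x‖⁻¹) := by
            gcongr; exact abs_sub _ _
        _ ≤ _ := by rw [add_mul]; linarith)
    (fun x _ => by positivity)
    (by
      have h1 := S.hv.c0
      have h2 := S.hw.c0
      have h3 := S.f1c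
      have h4 := S.f2c
      fun_prop) S.ifu S.ifu (fun x _ => hbd x) (fun x _ => (le_abs_self _).trans (hbd x))
    (fun x _ => by
      rw [← Finset.mul_sum, Finset.sum_sub_distrib, ← Finset.mul_sum, ← Finset.mul_sum, S.eq1,
        S.eq2, ← hse]
      ring)
  rw [← ofReal_integral_eq_lintegral_ofReal (S.iu.const_mul _)
    (Eventually.of_forall fun x => by positivity), integral_const_mul] at h
  have hpos : 0 ≤ ∫ x, √(f1 x ^ 2 + f2 x ^ 2) * √(v x ^ 2 + w x ^ 2) :=
    integral_nonneg fun x => by positivity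
  exact (ENNReal.ofReal_le_ofReal_iff hpos).1 h

/-- Testing the equation with `u`, real part: `∫ (|∇u|² + V |u|²) ≤ τ₊ ∫ |u|² + ∫ |f| |u|`. -/
lemma Sol.energy_re (S : Sol V V1 τ e κ γ v v1 v2 w w1 w2 f1 f2) :
    ∫⁻ x, ENNReal.ofReal ((gsq v1 x + gsq w1 x) + V x * (v x ^ 2 + w x ^ 2)) ≤
      ENNReal.ofReal (∫ x, (max 0 τ * (v x ^ 2 + w x ^ 2)
        + √(f1 x ^ 2 + f2 x ^ 2) * √(v x ^ 2 + w x ^ 2))) := by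
  refine lintegral_le_of_div' S.d_pos
    (F := fun j x => v x * v1 j x + w x * w1 j x)
    (F' := fun j x => v1 j x ^ 2 + v x * v2 j j x + (w1 j x ^ 2 + w x * w2 j j x))
    (B := fun x => τ * (v x ^ 2 + w x ^ 2) + (f1 x * v x + f2 x * w x))
    (D := fun x => |τ| * (v x ^ 2 + w x ^ 2)
        + √(f1 x ^ 2 + f2 x ^ 2) * √(v x ^ 2 + w x ^ 2))
    (fun j => by
      have h1 := S.hv.c0
      have h2 := S.hw.c0
      have h3 := S.hv.c1
      have h4 := S.hw.c1
      fun_prop)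
    (fun j => by
      have h1 := S.hv.c0
      have h2 := S.hw.c0
      have h3 := S.hv.c2
      have h4 := S.hw.c2
      have h5 := S.hv.c1
      have h6 := S.hw.c1
      fun_prop)
    (fun j x _ => by
      have h1 : HasDerivAt (fun t : ℝ => v (x + t • bv j)) (v1 j x) 0 := S.hv.d1 j x
      have h2 : HasDerivAt (fun t : ℝ => w (x + t • bv j)) (w1 j x) 0 := S.hw.d1 j x
      have h3 : HasDerivAt (fun t : ℝ => v1 j (x + t • bv j)) (v2 j j x) 0 := S.hv.d2 j j x
      have h4 : HasDerivAt (fun t : ℝ => w1 j (x + t • bv j)) (w2 j j x) 0 := S.hw.d2 j j x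
      refine HasDerivAt.congr_deriv ((h1.mul h3).add (h2.mul h4)) ?_
      simp only [zero_smul, add_zero]
      ring)
    (S.iH.const_mul 2)
    (fun j x hx => by
      have hr : 0 < ‖x‖ := norm_pos_iff.2 hx
      have g1 := sq_le_gsq v1 x j
      have g2 := sq_le_gsq w1 x j
      have m1 := mul_abs_le hr (y := v x) (z := v1 j x) (Y := v x ^ 2 + w x ^ 2)
        (Z := gsq v1 x + gsq w1 x) (by nlinarith) (by linarith [gsq_nonneg w1 x])
      have m2 := mul_abs_le hr (y := w x) (z := w1 j x) (Y := v x ^ 2 + w x ^ 2)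
        (Z := gsq v1 x + gsq w1 x) (by nlinarith) (by linarith [gsq_nonneg v1 x])
      calc |v x * v1 j x + w x * w1 j x| * (1 + ‖x‖⁻¹)
          ≤ (|v x * v1 j x| + |w x * w1 j x|) * (1 + ‖x‖⁻¹) := by
            gcongr; exact abs_add_le _ _
        _ ≤ _ := by rw [add_mul]; linarith)
    (fun x _ => ?_)
    (by
      have h1 := S.hv.c0
      have h2 := S.hw.c0
      have h3 := S.f1c
      have h4 := S.f2c
      fun_prop)
    ((S.iu.const_mul _).add S.ifu) ((S.iu.const_mul _).add S.ifu) (fun x _ => ?_)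
    (fun x _ => ?_) (fun x _ => ?_)
  · have := gsq_nonneg v1 x
    have := gsq_nonneg w1 x
    have := S.V0 x
    positivity
  · refine (abs_add_le _ _).trans (add_le_add ?_ (cs2_abs _ _ _ _))
    rw [abs_mul, abs_of_nonneg (a := v x ^ 2 + w x ^ 2) (by positivity)]
  · refine add_le_add ?_ (cs2 _ _ _ _)
    gcongr
    exact le_max_right _ _
  · simp only [Finset.sum_add_distrib, ← Finset.mul_sum, S.eq1, S.eq2, gsq]
    ring

end

/-! ### The Morawetz estimate -/

section
variable {d : ℕ} {V : Ed d → ℝ} {V1 : Fin d → Ed d → ℝ} {τ e κ γ : ℝ}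
    {v : Ed d → ℝ} {v1 : Fin d → Ed d → ℝ} {v2 : Fin d → Fin d → Ed d → ℝ}
    {w : Ed d → ℝ} {w1 : Fin d → Ed d → ℝ} {w2 : Fin d → Fin d → Ed d → ℝ}
    {f1 f2 : Ed d → ℝ}

lemma Sol.G_nonneg (_S : Sol V V1 τ e κ γ v v1 v2 w w1 w2 f1 f2) (x : Ed d) :
    0 ≤ gsq v1 x + gsq w1 x := add_nonneg (gsq_nonneg _ _) (gsq_nonneg _ _)

lemma Sol.iVu (S : Sol V V1 τ e κ γ v v1 v2 w w1 w2 f1 f2) :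
    Integrable fun x => V x * (v x ^ 2 + w x ^ 2) := by
  have hc : ContinuousOn (fun x => V x * (v x ^ 2 + w x ^ 2)) {0}ᶜ := by
    have h1 := S.hv.c0
    have h2 := S.hw.c0
    have h3 := S.Vc
    fun_prop
  refine ⟨aesm_of_continuousOn S.d_pos hc, ?_⟩
  rw [hasFiniteIntegral_iff_ofReal
    (Eventually.of_forall fun x => mul_nonneg (S.V0 x) (by positivity))]
  refine lt_of_le_of_lt ?_ (S.energy_re.trans_lt ENNReal.ofReal_lt_top)
  exact lintegral_mono fun x => ENNReal.ofReal_le_ofReal (by linarith [S.G_nonneg x])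

lemma Sol.energy_g (S : Sol V V1 τ e κ γ v v1 v2 w w1 w2 f1 f2) :
    ∫ x, (gsq v1 x + gsq w1 x) ≤ max 0 τ * (∫ x, (v x ^ 2 + w x ^ 2))
        + ∫ x, √(f1 x ^ 2 + f2 x ^ 2) * √(v x ^ 2 + w x ^ 2) := by
  have h := S.energy_re
  rw [integral_add (S.iu.const_mul _) S.ifu, integral_const_mul] at h
  have h0 : 0 ≤ max 0 τ * (∫ x, (v x ^ 2 + w x ^ 2))
        + ∫ x, √(f1 x ^ 2 + f2 x ^ 2) * √(v x ^ 2 + w x ^ 2) := by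
    have h1 : 0 ≤ ∫ x, (v x ^ 2 + w x ^ 2) := integral_nonneg fun x => by positivity
    have h2 : 0 ≤ ∫ x, √(f1 x ^ 2 + f2 x ^ 2) * √(v x ^ 2 + w x ^ 2) :=
      integral_nonneg fun x => by positivity
    have := le_max_left 0 τ
    positivity
  rw [← ENNReal.ofReal_le_ofReal_iff h0, ofReal_integral_eq_lintegral_ofReal S.ig
    (Eventually.of_forall S.G_nonneg)]
  refine le_trans ?_ h
  refine lintegral_mono fun x => ENNReal.ofReal_le_ofReal ?_
  have := mul_nonneg (S.V0 x) (by positivity : 0 ≤ v x ^ 2 + w x ^ 2)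
  linarith

/-- The pointwise majorant of the source terms in the Morawetz identity; the first term is the part
of the repulsivity bound that is absorbed later. -/
def morB {d : ℕ} (e κ : ℝ) (v : Ed d → ℝ) (v1 : Fin d → Ed d → ℝ) (w : Ed d → ℝ)
    (w1 : Fin d → Ed d → ℝ) (f1 f2 : Ed d → ℝ) (x : Ed d) : ℝ :=
  κ * (((d : ℝ) - 1) * (d - 3) / 4) * ((v x ^ 2 + w x ^ 2) * (‖x‖ ^ 3)⁻¹)
    + √(f1 x ^ 2 + f2 x ^ 2) * √(gsq v1 x + gsq w1 x)
    + (d : ℝ) / 2 * (√(f1 x ^ 2 + f2 x ^ 2) * √(v x ^ 2 + w x ^ 2) * ‖x‖⁻¹)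
    + |e| * (√(v x ^ 2 + w x ^ 2) * √(gsq v1 x + gsq w1 x))

lemma Sol.imorB (S : Sol V V1 τ e κ γ v v1 v2 w w1 w2 f1 f2) :
    Integrable (morB e κ v v1 w w1 f1 f2) :=
  (((S.i3.const_mul _).add S.ifg).add (S.ifur.const_mul _)).add (S.iug.const_mul _)

lemma rho_le_inv {a : ℝ} (ha : 0 < a) {x : Ed d} (hx : x ≠ 0) : rho a x ≤ ‖x‖⁻¹ := by
  rw [← one_div, le_div_iff₀ (norm_pos_iff.2 hx)]
  exact rho_mul_norm_le ha x

lemma wL_bounds (hd : 3 < d) {a : ℝ} (ha : 0 < a) {x : Ed d} (hx : x ≠ 0) :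
    |wL a x| ≤ d * ‖x‖⁻¹ := by
  have hd' : (3 : ℝ) < d := by exact_mod_cast hd
  have h0 := rho_pos ha x
  have h1 := rho_mul_a_le ha x
  have h2 := rho_le_inv ha hx
  have h3 : a ^ 2 * rho a x ^ 3 ≤ rho a x := by
    calc a ^ 2 * rho a x ^ 3 = (rho a x ^ 2 * a ^ 2) * rho a x := by ring
      _ ≤ 1 * rho a x := by gcongr
      _ = _ := one_mul _
  have h4 : 0 ≤ ((d : ℝ) - 1) * rho a x := mul_nonneg (by linarith) h0.le
  have h5 : 0 ≤ a ^ 2 * rho a x ^ 3 := by positivity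
  rw [wL, abs_of_nonneg (by linarith)]
  have h6 : (d : ℝ) * rho a x ≤ d * ‖x‖⁻¹ := by gcongr
  linarith

/-- The radial part of the gradient of `u` against a pair `(p, q)`, by Cauchy–Schwarz. -/
lemma rho_xgrad_bound {a : ℝ} (ha : 0 < a) (v1 w1 : Fin d → Ed d → ℝ) (p q : ℝ) (x : Ed d) :
    |rho a x * (p * xgrad v1 x + q * xgrad w1 x)|
      ≤ √(p ^ 2 + q ^ 2) * √(gsq v1 x + gsq w1 x) := by
  have h0 := rho_pos ha x
  have h1 := cs2_abs p q (xgrad v1 x) (xgrad w1 x)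
  have h2 : √(xgrad v1 x ^ 2 + xgrad w1 x ^ 2) ≤ ‖x‖ * √(gsq v1 x + gsq w1 x) := by
    refine Real.sqrt_le_iff.2 ⟨by positivity, ?_⟩
    rw [mul_pow, Real.sq_sqrt (add_nonneg (gsq_nonneg _ _) (gsq_nonneg _ _)), mul_add]
    exact add_le_add (xgrad_sq_le _ _) (xgrad_sq_le _ _)
  have h3 := rho_mul_norm_le ha x
  rw [abs_mul, abs_of_pos h0]
  calc rho a x * |p * xgrad v1 x + q * xgrad w1 x|
      ≤ rho a x * (√(p ^ 2 + q ^ 2) * (‖x‖ * √(gsq v1 x + gsq w1 x))) := by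
        gcongr; exact h1.trans (by gcongr)
    _ = (rho a x * ‖x‖) * (√(p ^ 2 + q ^ 2) * √(gsq v1 x + gsq w1 x)) := by ring
    _ ≤ 1 * (√(p ^ 2 + q ^ 2) * √(gsq v1 x + gsq w1 x)) := by gcongr
    _ = _ := one_mul _

/-- The Morawetz estimate with the weight `√(a² + ‖x‖²)`. -/
lemma Sol.morawetz (S : Sol V V1 τ e κ γ v v1 v2 w w1 w2 f1 f2) {a : ℝ} (ha : 0 < a) :
    ∫⁻ x, ENNReal.ofReal (a ^ 2 * rho a x ^ 3 * (gsq v1 x + gsq w1 x)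
        + γ / 2 * rho a x * (V x * (v x ^ 2 + w x ^ 2))
        + ((d : ℝ) - 1) * (d - 3) / 4 * rho a x ^ 3 * (v x ^ 2 + w x ^ 2)) ≤
      ENNReal.ofReal (∫ x, morB e κ v v1 w w1 f1 f2 x) := by
  have hd' : (3 : ℝ) < d := by exact_mod_cast S.hd
  have key : ∀ x ≠ 0, a ^ 2 * rho a x ^ 3 * (gsq v1 x + gsq w1 x)
        + γ / 2 * rho a x * (V x * (v x ^ 2 + w x ^ 2))
        + ((d : ℝ) - 1) * (d - 3) / 4 * rho a x ^ 3 * (v x ^ 2 + w x ^ 2) ≤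
      rho a x * (gsq v1 x + gsq w1 x) - rho a x ^ 3 * (xgrad v1 x ^ 2 + xgrad w1 x ^ 2)
        + 1 / 4 * wM a x * (v x ^ 2 + w x ^ 2)
        - 1 / 2 * rho a x * (∑ j, x j * V1 j x) * (v x ^ 2 + w x ^ 2)
        + κ * (((d : ℝ) - 1) * (d - 3) / 4) * rho a x * ‖x‖⁻¹ ^ 2 * (v x ^ 2 + w x ^ 2) := by
    intro x hx
    have hr : 0 < ‖x‖ := norm_pos_iff.2 hx
    have h0 := rho_pos ha x
    have hU : 0 ≤ v x ^ 2 + w x ^ 2 := by positivity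
    -- the Hessian of the weight is bounded below by `a² ρ³`
    have t1 : a ^ 2 * rho a x ^ 3 * (gsq v1 x + gsq w1 x) ≤
        rho a x * (gsq v1 x + gsq w1 x)
          - rho a x ^ 3 * (xgrad v1 x ^ 2 + xgrad w1 x ^ 2) := by
      have e1 : rho a x = rho a x ^ 3 * (a ^ 2 + ‖x‖ ^ 2) := by
        have := rho_sq ha x
        calc rho a x = rho a x * (rho a x ^ 2 * (a ^ 2 + ‖x‖ ^ 2)) := by rw [this, mul_one]
          _ = _ := by ring
      have e2 : rho a x * (gsq v1 x + gsq w1 x)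
          = rho a x ^ 3 * (a ^ 2 + ‖x‖ ^ 2) * (gsq v1 x + gsq w1 x) := by rw [← e1]
      rw [e2]
      have e3 : rho a x ^ 3 * (xgrad v1 x ^ 2 + xgrad w1 x ^ 2)
          ≤ rho a x ^ 3 * (‖x‖ ^ 2 * gsq v1 x + ‖x‖ ^ 2 * gsq w1 x) := by
        gcongr
        · exact xgrad_sq_le _ _
        · exact xgrad_sq_le _ _
      nlinarith
    have t2 : ((d : ℝ) - 1) * (d - 3) / 4 * rho a x ^ 3 * (v x ^ 2 + w x ^ 2)
        ≤ 1 / 4 * wM a x * (v x ^ 2 + w x ^ 2) := by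
      refine mul_le_mul_of_nonneg_right ?_ hU
      have h1 : 0 ≤ 6 * a ^ 2 * ((d : ℝ) - 3) * rho a x ^ 5 := by
        have : 0 ≤ (d : ℝ) - 3 := by linarith
        positivity
      have h2 : 0 ≤ 15 * a ^ 4 * rho a x ^ 7 := by positivity
      unfold wM
      linarith
    have t3 : 1 / 2 * rho a x * (∑ j, x j * V1 j x) * (v x ^ 2 + w x ^ 2)
        ≤ κ * (((d : ℝ) - 1) * (d - 3) / 4) * rho a x * ‖x‖⁻¹ ^ 2 * (v x ^ 2 + w x ^ 2)
          - γ / 2 * rho a x * (V x * (v x ^ 2 + w x ^ 2)) := by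
      have h1 := S.rep x hx
      have h2 : ∑ j, x j * V1 j x ≤ κ * ((d : ℝ) - 1) * (d - 3) / 2 * ‖x‖⁻¹ ^ 2 - γ * V x := by
        have : κ * ((d : ℝ) - 1) * (d - 3) / (2 * ‖x‖ ^ 2)
          = κ * ((d : ℝ) - 1) * (d - 3) / 2 * ‖x‖⁻¹ ^ 2 := by field_simp
        linarith
      calc 1 / 2 * rho a x * (∑ j, x j * V1 j x) * (v x ^ 2 + w x ^ 2)
          ≤ 1 / 2 * rho a x * (κ * ((d : ℝ) - 1) * (d - 3) / 2 * ‖x‖⁻¹ ^ 2 - γ * V x)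
              * (v x ^ 2 + w x ^ 2) := by gcongr
        _ = _ := by ring
    linarith
  have hnn : ∀ x, 0 ≤ a ^ 2 * rho a x ^ 3 * (gsq v1 x + gsq w1 x)
        + γ / 2 * rho a x * (V x * (v x ^ 2 + w x ^ 2))
        + ((d : ℝ) - 1) * (d - 3) / 4 * rho a x ^ 3 * (v x ^ 2 + w x ^ 2) := by
    intro x
    have h0 := rho_pos ha x
    have h1 := S.G_nonneg x
    have h2 := S.V0 x
    have h3 := S.hγ
    have h4 : 0 ≤ ((d : ℝ) - 1) * (d - 3) / 4 := by
      have : 0 ≤ ((d : ℝ) - 1) * (d - 3) := mul_nonneg (by linarith) (by linarith)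
      linarith
    positivity
  have hle : ∀ x ≠ 0, |κ * (((d : ℝ) - 1) * (d - 3) / 4) * rho a x * ‖x‖⁻¹ ^ 2
          * (v x ^ 2 + w x ^ 2)
        + rho a x * (f1 x * xgrad v1 x + f2 x * xgrad w1 x)
        + 1 / 2 * wL a x * (f1 x * v x + f2 x * w x)
        + e * (rho a x * (w x * xgrad v1 x + -v x * xgrad w1 x))|
        ≤ morB e κ v v1 w w1 f1 f2 x := by
    intro x hx
    have hr : 0 < ‖x‖ := norm_pos_iff.2 hx
    have h0 := rho_pos ha x
    have hc0 : 0 ≤ κ * (((d : ℝ) - 1) * (d - 3) / 4) := by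
      have : 0 ≤ ((d : ℝ) - 1) * (d - 3) := mul_nonneg (by linarith) (by linarith)
      have := S.hκ
      positivity
    refine (abs_add_le _ _).trans (add_le_add ((abs_add_le _ _).trans
      (add_le_add ((abs_add_le _ _).trans (add_le_add ?_ ?_)) ?_)) ?_)
    · rw [abs_of_nonneg (by positivity)]
      have := rho_le_inv ha hx
      calc κ * (((d : ℝ) - 1) * (d - 3) / 4) * rho a x * ‖x‖⁻¹ ^ 2 * (v x ^ 2 + w x ^ 2)
          ≤ κ * (((d : ℝ) - 1) * (d - 3) / 4) * ‖x‖⁻¹ * ‖x‖⁻¹ ^ 2 * (v x ^ 2 + w x ^ 2) := by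
            gcongr
        _ = _ := by rw [← inv_pow]; ring
    · exact rho_xgrad_bound ha _ _ _ _ _
    · rw [abs_mul, abs_mul, abs_of_nonneg (by norm_num : (0 : ℝ) ≤ 1 / 2)]
      calc 1 / 2 * |wL a x| * |f1 x * v x + f2 x * w x|
          ≤ 1 / 2 * (d * ‖x‖⁻¹) * (√(f1 x ^ 2 + f2 x ^ 2) * √(v x ^ 2 + w x ^ 2)) := by
            gcongr
            · exact wL_bounds S.hd ha hx
            · exact cs2_abs _ _ _ _
        _ = _ := by ring
    · rw [abs_mul]
      gcongr
      have := rho_xgrad_bound ha v1 w1 (w x) (-v x) x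
      rwa [neg_sq, add_comm (w x ^ 2)] at this
  set K : ℝ := (2 + d * a⁻¹ + (d + 2) * a⁻¹ ^ 2 + |τ|) * (1 + a⁻¹) with hK
  have hmain := lintegral_le_of_div' S.d_pos
    (F := fun j x => morF a τ V v v1 j x + morF a τ V w w1 j x)
    (F' := fun j x => morF' a τ V V1 v v1 v2 j x + morF' a τ V V1 w w1 w2 j x)
    (H := fun x => K * (((gsq v1 x + gsq w1 x) + (v x ^ 2 + w x ^ 2)
      + (v x ^ 2 + w x ^ 2) * (‖x‖ ^ 3)⁻¹) * (1 + a⁻¹) + V x * (v x ^ 2 + w x ^ 2)))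
    (fun j => (morF_continuousOn ha τ S.Vc S.hv j).add (morF_continuousOn ha τ S.Vc S.hw j))
    (fun j => (morF'_continuousOn ha τ S.Vc S.V1c S.hv j).add
      (morF'_continuousOn ha τ S.Vc S.V1c S.hw j))
    (fun j x hx => by
      have h1 := morF_deriv ha τ S.hv x j (S.Vd j x hx)
      have h2 := morF_deriv ha τ S.hw x j (S.Vd j x hx)
      exact HasDerivAt.add h1 h2)
    (((S.iH.mul_const _).add S.iVu).const_mul K)
    (fun j x hx => by
      have h1 := morF_bound S.d_pos ha τ S.V0 v v1 j hx
      have h2 := morF_bound S.d_pos ha τ S.V0 w w1 j hx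
      rw [← hK] at h1 h2
      calc |morF a τ V v v1 j x + morF a τ V w w1 j x| * (1 + ‖x‖⁻¹)
          ≤ (|morF a τ V v v1 j x| + |morF a τ V w w1 j x|) * (1 + ‖x‖⁻¹) := by
            gcongr; exact abs_add_le _ _
        _ ≤ _ := by
          rw [add_mul]
          refine (add_le_add h1 h2).trans (le_of_eq ?_)
          unfold domH
          ring)
    (A := fun x => rho a x * (gsq v1 x + gsq w1 x)
        - rho a x ^ 3 * (xgrad v1 x ^ 2 + xgrad w1 x ^ 2)
        + 1 / 4 * wM a x * (v x ^ 2 + w x ^ 2)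
        - 1 / 2 * rho a x * (∑ j, x j * V1 j x) * (v x ^ 2 + w x ^ 2)
        + κ * (((d : ℝ) - 1) * (d - 3) / 4) * rho a x * ‖x‖⁻¹ ^ 2 * (v x ^ 2 + w x ^ 2))
    (fun x hx => (hnn x).trans (key x hx))
    (B := fun x => κ * (((d : ℝ) - 1) * (d - 3) / 4) * rho a x * ‖x‖⁻¹ ^ 2
          * (v x ^ 2 + w x ^ 2)
        + rho a x * (f1 x * xgrad v1 x + f2 x * xgrad w1 x)
        + 1 / 2 * wL a x * (f1 x * v x + f2 x * w x)
        + e * (rho a x * (w x * xgrad v1 x + -v x * xgrad w1 x)))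
    (by
      have h1 := S.hv.c0
      have h2 := S.hw.c0
      have h3 := S.f1c
      have h4 := S.f2c
      have h5 := rho_continuous (d := d) ha
      have h6 := xgrad_continuous S.hv
      have h7 := xgrad_continuous S.hw
      have h8 := wL_continuous (d := d) ha
      have h9 : ContinuousOn (fun x : Ed d => ‖x‖⁻¹) {0}ᶜ :=
        continuous_norm.continuousOn.inv₀ fun x hx => norm_ne_zero_iff.2 hx
      fun_prop)
    S.imorB S.imorB hle (fun x hx => (le_abs_self _).trans (hle x hx))
    (fun x hx => by
      rw [Finset.sum_add_distrib, morF'_sum ha τ V V1 S.hv x, morF'_sum ha τ V V1 S.hw x,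
        S.eq1, S.eq2]
      ring)
  refine le_trans (lintegral_mono_ae ?_) hmain
  filter_upwards [ae_ne_zero S.d_pos] with x hx using ENNReal.ofReal_le_ofReal (key x hx)

end

/-! ### Consequences of the Morawetz estimate -/

section
variable {d : ℕ} {V : Ed d → ℝ} {V1 : Fin d → Ed d → ℝ} {τ e κ γ : ℝ}
    {v : Ed d → ℝ} {v1 : Fin d → Ed d → ℝ} {v2 : Fin d → Fin d → Ed d → ℝ}
    {w : Ed d → ℝ} {w1 : Fin d → Ed d → ℝ} {w2 : Fin d → Fin d → Ed d → ℝ}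
    {f1 f2 : Ed d → ℝ}

/-- The limit `a → 0` of the Morawetz estimate, by Fatou's lemma. -/
lemma Sol.weighted (S : Sol V V1 τ e κ γ v v1 v2 w w1 w2 f1 f2) :
    ∫⁻ x, ENNReal.ofReal (γ / 2 * (V x * (v x ^ 2 + w x ^ 2) * ‖x‖⁻¹)
        + ((d : ℝ) - 1) * (d - 3) / 4 * ((v x ^ 2 + w x ^ 2) * (‖x‖ ^ 3)⁻¹)) ≤
      ENNReal.ofReal (∫ x, morB e κ v v1 w w1 f1 f2 x) := by
  have hd' : (3 : ℝ) < d := by exact_mod_cast S.hd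
  have hc0 : 0 ≤ ((d : ℝ) - 1) * (d - 3) / 4 := by
    have : 0 ≤ ((d : ℝ) - 1) * (d - 3) := mul_nonneg (by linarith) (by linarith)
    linarith
  set g : ℕ → Ed d → ℝ := fun n x => γ / 2 * rho (1 / ((n : ℝ) + 1)) x * (V x * (v x ^ 2 + w x ^ 2))
        + ((d : ℝ) - 1) * (d - 3) / 4 * rho (1 / ((n : ℝ) + 1)) x ^ 3 * (v x ^ 2 + w x ^ 2)
    with hg
  have ha : ∀ n : ℕ, (0 : ℝ) < 1 / ((n : ℝ) + 1) := fun n => by positivity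
  have h1 : ∀ n, ∫⁻ x, ENNReal.ofReal (g n x)
      ≤ ENNReal.ofReal (∫ x, morB e κ v v1 w w1 f1 f2 x) := fun n => by
    refine le_trans (lintegral_mono fun x => ENNReal.ofReal_le_ofReal ?_) (S.morawetz (ha n))
    have h0 := rho_pos (ha n) x
    have : 0 ≤ (1 / ((n : ℝ) + 1)) ^ 2 * rho (1 / ((n : ℝ) + 1)) x ^ 3
        * (gsq v1 x + gsq w1 x) := mul_nonneg (by positivity) (S.G_nonneg x)
    simp only [hg]
    linarith
  have h2 : ∫⁻ x, ENNReal.ofReal (γ / 2 * (V x * (v x ^ 2 + w x ^ 2) * ‖x‖⁻¹)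
        + ((d : ℝ) - 1) * (d - 3) / 4 * ((v x ^ 2 + w x ^ 2) * (‖x‖ ^ 3)⁻¹))
      = ∫⁻ x, liminf (fun n => ENNReal.ofReal (g n x)) atTop := by
    refine lintegral_congr_ae ?_
    filter_upwards [ae_ne_zero S.d_pos] with x hx
    have hr : 0 < ‖x‖ := norm_pos_iff.2 hx
    have hrho : Tendsto (fun n : ℕ => rho (1 / ((n : ℝ) + 1)) x) atTop (𝓝 ‖x‖⁻¹) := by
      have h3 : Tendsto (fun n : ℕ => 1 / ((n : ℝ) + 1)) atTop (𝓝 0) :=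
        tendsto_one_div_add_atTop_nhds_zero_nat
      have h4 : Tendsto (fun n : ℕ => √((1 / ((n : ℝ) + 1)) ^ 2 + ‖x‖ ^ 2)) atTop
          (𝓝 √(0 ^ 2 + ‖x‖ ^ 2)) := ((h3.pow 2).add_const _).sqrt
      have e1 : √((0 : ℝ) ^ 2 + ‖x‖ ^ 2) = ‖x‖ := by
        rw [zero_pow two_ne_zero, zero_add, Real.sqrt_sq hr.le]
      rw [e1] at h4
      exact h4.inv₀ hr.ne'
    have : Tendsto (fun n => ENNReal.ofReal (g n x)) atTop
        (𝓝 (ENNReal.ofReal (γ / 2 * (V x * (v x ^ 2 + w x ^ 2) * ‖x‖⁻¹)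
        + ((d : ℝ) - 1) * (d - 3) / 4 * ((v x ^ 2 + w x ^ 2) * (‖x‖ ^ 3)⁻¹)))) := by
      refine ENNReal.tendsto_ofReal ?_
      have h5 := ((hrho.const_mul (γ / 2)).mul_const (V x * (v x ^ 2 + w x ^ 2))).add
        (((hrho.pow 3).const_mul (((d : ℝ) - 1) * (d - 3) / 4)).mul_const (v x ^ 2 + w x ^ 2))
      convert h5 using 2
      rw [inv_pow]; ring
    exact this.liminf_eq.symm
  rw [h2]
  refine (lintegral_liminf_le' fun n => ?_).trans ?_
  · refine AEMeasurable.ennreal_ofReal (aesm_of_continuousOn S.d_pos ?_).aemeasurable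
    have h3 := S.hv.c0
    have h4 := S.hw.c0
    have h5 := rho_continuous (d := d) (ha n)
    have h6 := S.Vc
    simp only [hg]
    fun_prop
  · refine (liminf_le_liminf (Eventually.of_forall h1)).trans ?_
    simp

lemma Sol.iVr (S : Sol V V1 τ e κ γ v v1 v2 w w1 w2 f1 f2) :
    Integrable fun x => V x * (v x ^ 2 + w x ^ 2) * ‖x‖⁻¹ := by
  have hd' : (3 : ℝ) < d := by exact_mod_cast S.hd
  have hγ := S.hγ
  have hc0 : 0 ≤ ((d : ℝ) - 1) * (d - 3) / 4 := by
    have : 0 ≤ ((d : ℝ) - 1) * (d - 3) := mul_nonneg (by linarith) (by linarith)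
    linarith
  have hnn : ∀ x, 0 ≤ V x * (v x ^ 2 + w x ^ 2) * ‖x‖⁻¹ := fun x => by
    have := S.V0 x
    positivity
  suffices h : Integrable fun x => γ / 2 * (V x * (v x ^ 2 + w x ^ 2) * ‖x‖⁻¹) by
    refine (h.const_mul (γ / 2)⁻¹).congr (Eventually.of_forall fun x => ?_)
    have : γ / 2 ≠ 0 := by positivity
    simp only
    rw [inv_mul_cancel_left₀ this]
  refine ⟨(S.iVu.1.mul measurable_norm.inv.aestronglyMeasurable).const_mul _, ?_⟩
  rw [hasFiniteIntegral_iff_ofReal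
    (Eventually.of_forall fun x => mul_nonneg (by positivity) (hnn x))]
  refine lt_of_le_of_lt ?_ (S.weighted.trans_lt ENNReal.ofReal_lt_top)
  refine lintegral_mono fun x => ENNReal.ofReal_le_ofReal ?_
  have : 0 ≤ ((d : ℝ) - 1) * (d - 3) / 4 * ((v x ^ 2 + w x ^ 2) * (‖x‖ ^ 3)⁻¹) := by positivity
  linarith

/-- The source terms of the Morawetz estimate, without the repulsivity remainder. -/
def morR {d : ℕ} (e : ℝ) (v : Ed d → ℝ) (v1 : Fin d → Ed d → ℝ) (w : Ed d → ℝ)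
    (w1 : Fin d → Ed d → ℝ) (f1 f2 : Ed d → ℝ) : ℝ :=
  (∫ x, √(f1 x ^ 2 + f2 x ^ 2) * √(gsq v1 x + gsq w1 x))
    + (d : ℝ) / 2 * (∫ x, √(f1 x ^ 2 + f2 x ^ 2) * √(v x ^ 2 + w x ^ 2) * ‖x‖⁻¹)
    + |e| * (∫ x, √(v x ^ 2 + w x ^ 2) * √(gsq v1 x + gsq w1 x))

lemma Sol.integral_morB (S : Sol V V1 τ e κ γ v v1 v2 w w1 w2 f1 f2) :
    ∫ x, morB e κ v v1 w w1 f1 f2 x = κ * (((d : ℝ) - 1) * (d - 3) / 4)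
      * (∫ x, (v x ^ 2 + w x ^ 2) * (‖x‖ ^ 3)⁻¹) + morR e v v1 w w1 f1 f2 := by
  have h1 := S.i3.const_mul (κ * (((d : ℝ) - 1) * (d - 3) / 4))
  have h2 : Integrable fun x => κ * (((d : ℝ) - 1) * (d - 3) / 4)
        * ((v x ^ 2 + w x ^ 2) * (‖x‖ ^ 3)⁻¹)
      + √(f1 x ^ 2 + f2 x ^ 2) * √(gsq v1 x + gsq w1 x) := h1.add S.ifg
  have h3 : Integrable fun x => κ * (((d : ℝ) - 1) * (d - 3) / 4)
        * ((v x ^ 2 + w x ^ 2) * (‖x‖ ^ 3)⁻¹)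
      + √(f1 x ^ 2 + f2 x ^ 2) * √(gsq v1 x + gsq w1 x)
      + (d : ℝ) / 2 * (√(f1 x ^ 2 + f2 x ^ 2) * √(v x ^ 2 + w x ^ 2) * ‖x‖⁻¹) :=
    h2.add (S.ifur.const_mul _)
  unfold morB morR
  rw [integral_add h3 (S.iug.const_mul _), integral_add h2 (S.ifur.const_mul _),
    integral_add h1 S.ifg, integral_const_mul, integral_const_mul, integral_const_mul]
  ring

lemma Sol.morB_nonneg (S : Sol V V1 τ e κ γ v v1 v2 w w1 w2 f1 f2) :
    0 ≤ ∫ x, morB e κ v v1 w w1 f1 f2 x := by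
  have hd' : (3 : ℝ) < d := by exact_mod_cast S.hd
  have hc0 : 0 ≤ ((d : ℝ) - 1) * (d - 3) / 4 := by
    have : 0 ≤ ((d : ℝ) - 1) * (d - 3) := mul_nonneg (by linarith) (by linarith)
    linarith
  have := S.hκ
  exact integral_nonneg fun x => by unfold morB; positivity

/-- Absorbing the repulsivity remainder controls the two weighted integrals of `|u|²`. -/
lemma Sol.absorbed (S : Sol V V1 τ e κ γ v v1 v2 w w1 w2 f1 f2) :
    γ / 2 * (∫ x, V x * (v x ^ 2 + w x ^ 2) * ‖x‖⁻¹)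
      + (1 - κ) * (((d : ℝ) - 1) * (d - 3) / 4) * (∫ x, (v x ^ 2 + w x ^ 2) * (‖x‖ ^ 3)⁻¹)
      ≤ morR e v v1 w w1 f1 f2 := by
  have hd' : (3 : ℝ) < d := by exact_mod_cast S.hd
  have hγ := S.hγ
  have hc0 : 0 ≤ ((d : ℝ) - 1) * (d - 3) / 4 := by
    have : 0 ≤ ((d : ℝ) - 1) * (d - 3) := mul_nonneg (by linarith) (by linarith)
    linarith
  have h := S.weighted
  have hi : Integrable fun x => γ / 2 * (V x * (v x ^ 2 + w x ^ 2) * ‖x‖⁻¹)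
        + ((d : ℝ) - 1) * (d - 3) / 4 * ((v x ^ 2 + w x ^ 2) * (‖x‖ ^ 3)⁻¹) :=
    (S.iVr.const_mul _).add (S.i3.const_mul _)
  rw [← ofReal_integral_eq_lintegral_ofReal hi
    (Eventually.of_forall fun x => by have := S.V0 x; simp only [Pi.zero_apply]; positivity),
    ENNReal.ofReal_le_ofReal_iff S.morB_nonneg,
    integral_add (S.iVr.const_mul _) (S.i3.const_mul _), integral_const_mul, integral_const_mul,
    S.integral_morB] at h
  linarith

/-- The Morawetz estimate with `a = R` bounds the gradient on the ball of radius `R`. -/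
lemma Sol.ball_grad (S : Sol V V1 τ e κ γ v v1 v2 w w1 w2 f1 f2) {R : ℝ} (hR : 0 < R) :
    (ENNReal.ofReal R)⁻¹ * ∫⁻ x in ball (0 : Ed d) R, ENNReal.ofReal (gsq v1 x + gsq w1 x)
      ≤ ENNReal.ofReal (4 * ∫ x, morB e κ v v1 w w1 f1 f2 x) := by
  have hd' : (3 : ℝ) < d := by exact_mod_cast S.hd
  have hγ := S.hγ
  have hc0 : 0 ≤ ((d : ℝ) - 1) * (d - 3) / 4 := by
    have : 0 ≤ ((d : ℝ) - 1) * (d - 3) := mul_nonneg (by linarith) (by linarith)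
    linarith
  rw [← ENNReal.ofReal_inv_of_pos hR, ← lintegral_const_mul' _ _ ENNReal.ofReal_ne_top,
    ENNReal.ofReal_mul (by norm_num)]
  refine le_trans ?_ (mul_le_mul_right (S.morawetz hR) _)
  rw [← lintegral_const_mul' _ _ ENNReal.ofReal_ne_top]
  refine le_trans (setLIntegral_mono' measurableSet_ball fun x hx => ?_)
    (lintegral_mono' Measure.restrict_le_self le_rfl)
  have h0 := rho_pos hR x
  have hU : 0 ≤ v x ^ 2 + w x ^ 2 := by positivity
  have hG := S.G_nonneg x
  have hV := S.V0 x
  rw [← ENNReal.ofReal_mul (by positivity), ← ENNReal.ofReal_mul (by norm_num)]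
  refine ENNReal.ofReal_le_ofReal ?_
  rw [mem_ball_zero_iff] at hx
  -- inside the ball `R ρ ≥ 1/2` and `(R ρ)² ≥ 1/2`
  have h1 := rho_sq hR x
  have h2 : 1 / 2 ≤ (rho R x * R) ^ 2 := by
    have : ‖x‖ ^ 2 ≤ R ^ 2 := by gcongr
    nlinarith [sq_nonneg (rho R x)]
  have h3 : 1 / 2 ≤ rho R x * R := by
    by_contra! h
    have : (rho R x * R) ^ 2 ≤ (1 / 2) ^ 2 := by gcongr
    norm_num at this h2
    linarith
  have h4 : R⁻¹ ≤ 4 * (R ^ 2 * rho R x ^ 3) := by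
    rw [inv_le_iff_one_le_mul₀ hR]
    have : 1 / 2 * (1 / 2) ≤ (rho R x * R) ^ 2 * (rho R x * R) := by gcongr
    nlinarith
  have h5 : R⁻¹ * (gsq v1 x + gsq w1 x) ≤ 4 * (R ^ 2 * rho R x ^ 3) * (gsq v1 x + gsq w1 x) := by
    gcongr
  have h6 : 0 ≤ γ / 2 * rho R x * (V x * (v x ^ 2 + w x ^ 2)) := by positivity
  have h7 : 0 ≤ ((d : ℝ) - 1) * (d - 3) / 4 * rho R x ^ 3 * (v x ^ 2 + w x ^ 2) := by positivity
  linarith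

/-- Cauchy–Schwarz and the two energy identities control the term produced by `e`. -/
lemma Sol.cross_term (S : Sol V V1 τ e κ γ v v1 v2 w w1 w2 f1 f2) :
    |e| * (∫ x, √(v x ^ 2 + w x ^ 2) * √(gsq v1 x + gsq w1 x))
      ≤ √(|e| + max 0 τ) * ∫ x, √(f1 x ^ 2 + f2 x ^ 2) * √(v x ^ 2 + w x ^ 2) := by
  have h1 := S.energy_im
  have h2 := S.energy_g
  have hI : 0 ≤ ∫ x, √(f1 x ^ 2 + f2 x ^ 2) * √(v x ^ 2 + w x ^ 2) :=
    integral_nonneg fun x => by positivity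
  have hA : 0 ≤ ∫ x, (v x ^ 2 + w x ^ 2) := integral_nonneg fun x => by positivity
  have hG : 0 ≤ ∫ x, (gsq v1 x + gsq w1 x) := integral_nonneg S.G_nonneg
  have hτ : 0 ≤ max 0 τ := le_max_left _ _
  have hcs : (∫ x, √(v x ^ 2 + w x ^ 2) * √(gsq v1 x + gsq w1 x))
      ≤ √(∫ x, (v x ^ 2 + w x ^ 2)) * √(∫ x, (gsq v1 x + gsq w1 x)) := by
    have h := integral_mul_le_Lp_mul_Lq_of_nonneg (μ := (volume : Measure (Ed d)))
      Real.HolderConjugate.two_two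
      (f := fun x => √(v x ^ 2 + w x ^ 2)) (g := fun x => √(gsq v1 x + gsq w1 x))
      (Eventually.of_forall fun x => Real.sqrt_nonneg _)
      (Eventually.of_forall fun x => Real.sqrt_nonneg _)
      (by
        rw [ENNReal.ofReal_ofNat]
        refine (memLp_two_iff_integrable_sq
          (Real.continuous_sqrt.comp_aestronglyMeasurable S.iu.1)).2 ?_
        refine S.iu.congr (Eventually.of_forall fun x => ?_)
        simp only [Real.sq_sqrt (by positivity : 0 ≤ v x ^ 2 + w x ^ 2)])
      (by
        rw [ENNReal.ofReal_ofNat]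
        refine (memLp_two_iff_integrable_sq
          (Real.continuous_sqrt.comp_aestronglyMeasurable S.ig.1)).2 ?_
        refine S.ig.congr (Eventually.of_forall fun x => ?_)
        simp only [Real.sq_sqrt (S.G_nonneg x)])
    have e1 : ∀ x, √(v x ^ 2 + w x ^ 2) ^ (2 : ℝ) = v x ^ 2 + w x ^ 2 := fun x => by
      rw [Real.rpow_two, Real.sq_sqrt (by positivity)]
    have e2 : ∀ x, √(gsq v1 x + gsq w1 x) ^ (2 : ℝ) = gsq v1 x + gsq w1 x := fun x => by
      rw [Real.rpow_two, Real.sq_sqrt (S.G_nonneg x)]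
    simp only [e1, e2, ← Real.sqrt_eq_rpow] at h
    exact h
  set I := ∫ x, √(f1 x ^ 2 + f2 x ^ 2) * √(v x ^ 2 + w x ^ 2)
  set A := ∫ x, (v x ^ 2 + w x ^ 2)
  set G := ∫ x, (gsq v1 x + gsq w1 x)
  have h3 : |e| * (√A * √G) ≤ √(|e| + max 0 τ) * I := by
    refine (abs_le_of_sq_le_sq' ?_ (by positivity)).2
    rw [mul_pow, mul_pow, mul_pow, Real.sq_sqrt hA, Real.sq_sqrt hG, Real.sq_sqrt (by positivity)]
    have he : 0 ≤ |e| := abs_nonneg e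
    calc |e| ^ 2 * (A * G) = (|e| * A) * (|e| * G) := by ring
      _ ≤ I * (|e| * (max 0 τ * A + I)) := by gcongr
      _ = I * (max 0 τ * (|e| * A) + |e| * I) := by ring
      _ ≤ I * (max 0 τ * I + |e| * I) := by gcongr
      _ = _ := by ring
  calc _ ≤ |e| * (√A * √G) := by gcongr
    _ ≤ _ := h3

end

/-! ### Duality on dyadic shells -/

lemma measurableSet_shell (d : ℕ) (j : ℤ) : MeasurableSet (shell d j) :=
  (measurableSet_lt measurable_const measurable_norm).inter
    (measurableSet_le measurable_norm measurable_const)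

lemma exists_mem_shell {d : ℕ} {x : Ed d} (hx : x ≠ 0) : ∃ j : ℤ, x ∈ shell d j := by
  obtain ⟨n, hn⟩ := exists_mem_Ioc_zpow (norm_pos_iff.2 hx) (one_lt_two : (1 : ℝ) < 2)
  exact ⟨n, hn.1, hn.2⟩

/-- The pairing of `X*` with functions whose mass on the shell `C_j` is at most `2^{j+1} K`. -/
lemma duality {d : ℕ} (hd : 0 < d) {P Q : Ed d → ℝ} (hP : AEMeasurable P) (hQ : AEMeasurable Q)
    (hP0 : ∀ x, 0 ≤ P x) (hQ0 : ∀ x, 0 ≤ Q x)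
    {K : ℝ≥0∞} (hK : ∀ j : ℤ, ∫⁻ x in shell d j, ENNReal.ofReal (Q x)
      ≤ ENNReal.ofReal ((2 : ℝ) ^ (j + 1)) * K) :
    ∫⁻ x, ENNReal.ofReal (√(P x) * √(Q x))
      ≤ nXstar (fun x => ENNReal.ofReal (P x)) * K ^ (1 / 2 : ℝ) := by
  have hcov : ∫⁻ x, ENNReal.ofReal (√(P x) * √(Q x))
      = ∫⁻ x in ⋃ j : ℤ, shell d j, ENNReal.ofReal (√(P x) * √(Q x)) := by
    rw [← setLIntegral_univ]
    refine setLIntegral_congr ?_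
    filter_upwards [ae_ne_zero hd] with x hx
    exact propext ⟨fun _ => mem_iUnion.2 (exists_mem_shell hx), fun _ => mem_univ x⟩
  rw [hcov]
  refine (lintegral_iUnion_le _ _).trans ?_
  rw [nXstar, ← ENNReal.tsum_mul_right]
  refine ENNReal.tsum_le_tsum fun j => ?_
  have hs : ∀ {R : ℝ}, 0 ≤ R → ENNReal.ofReal √R ^ (2 : ℝ) = ENNReal.ofReal R := by
    intro R hR
    rw [ENNReal.rpow_two, ← ENNReal.ofReal_pow (Real.sqrt_nonneg _), Real.sq_sqrt hR]
  have hol := ENNReal.lintegral_mul_le_Lp_mul_Lq (volume.restrict (shell d j))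
    Real.HolderConjugate.two_two
    (f := fun x => ENNReal.ofReal √(P x)) (g := fun x => ENNReal.ofReal √(Q x))
    (Real.continuous_sqrt.measurable.comp_aemeasurable hP.restrict).ennreal_ofReal
    (Real.continuous_sqrt.measurable.comp_aemeasurable hQ.restrict).ennreal_ofReal
  simp only [Pi.mul_apply, hs (hP0 _), hs (hQ0 _)] at hol
  calc ∫⁻ x in shell d j, ENNReal.ofReal (√(P x) * √(Q x))
      = ∫⁻ x in shell d j, ENNReal.ofReal √(P x) * ENNReal.ofReal √(Q x) := by
        simp only [ENNReal.ofReal_mul (Real.sqrt_nonneg _)]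
    _ ≤ _ := hol
    _ ≤ (∫⁻ x in shell d j, ENNReal.ofReal (P x)) ^ (1 / 2 : ℝ)
        * (ENNReal.ofReal ((2 : ℝ) ^ (j + 1)) * K) ^ (1 / 2 : ℝ) := by
        gcongr
        exact hK j
    _ = _ := by
        rw [ENNReal.mul_rpow_of_nonneg _ _ (by norm_num),
          ENNReal.mul_rpow_of_nonneg _ _ (by norm_num)]
        ring

lemma ball_le_nX2 {d : ℕ} (g : Ed d → ℝ≥0∞) {R : ℝ} (hR : 0 < R) :
    ∫⁻ x in ball (0 : Ed d) R, g x ≤ ENNReal.ofReal R * nX2 g := by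
  have h : (ENNReal.ofReal R)⁻¹ * ∫⁻ x in ball (0 : Ed d) R, g x ≤ nX2 g :=
    le_iSup₂ (f := fun (R : ℝ) (_ : 0 < R) =>
      (ENNReal.ofReal R)⁻¹ * ∫⁻ x in ball (0 : Ed d) R, g x) R hR
  have h0 : ENNReal.ofReal R ≠ 0 := by simpa using hR
  rw [← ENNReal.div_eq_inv_mul] at h
  rw [mul_comm]
  exact (ENNReal.div_le_iff h0 ENNReal.ofReal_ne_top).1 h

lemma shell_le_nX2 {d : ℕ} (g : Ed d → ℝ≥0∞) (j : ℤ) :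
    ∫⁻ x in shell d j, g x ≤ ENNReal.ofReal ((2 : ℝ) ^ (j + 1)) * (2 * nX2 g) := by
  have h2 : (0 : ℝ) < 2 ^ (j + 1) := by positivity
  have hsub : shell d j ⊆ ball 0 ((2 : ℝ) ^ (j + 1) * 2) := fun x hx => by
    rw [mem_ball_zero_iff]; have := hx.2; linarith
  refine (lintegral_mono_set hsub).trans ((ball_le_nX2 g (by positivity)).trans (le_of_eq ?_))
  rw [ENNReal.ofReal_mul h2.le, mul_assoc]
  simp

lemma duality_nX2 {d : ℕ} (hd : 0 < d) {P Q : Ed d → ℝ} (hP : AEMeasurable P)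
    (hQ : AEMeasurable Q) (hP0 : ∀ x, 0 ≤ P x) (hQ0 : ∀ x, 0 ≤ Q x) :
    ∫⁻ x, ENNReal.ofReal (√(P x) * √(Q x))
      ≤ nXstar (fun x => ENNReal.ofReal (P x))
        * (2 * nX2 (fun x => ENNReal.ofReal (Q x))) ^ (1 / 2 : ℝ) :=
  duality hd hP hQ hP0 hQ0 (shell_le_nX2 _)

lemma duality_weight {d : ℕ} (hd : 0 < d) {P Q : Ed d → ℝ} (hP : AEMeasurable P)
    (hQ : AEMeasurable Q) (hP0 : ∀ x, 0 ≤ P x) (hQ0 : ∀ x, 0 ≤ Q x) :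
    ∫⁻ x, ENNReal.ofReal (√(P x) * √(Q x) * ‖x‖⁻¹)
      ≤ nXstar (fun x => ENNReal.ofReal (P x))
        * (∫⁻ x, ENNReal.ofReal (Q x * (‖x‖ ^ 3)⁻¹)) ^ (1 / 2 : ℝ) := by
  have h := duality hd hP (Q := fun x => Q x * ‖x‖⁻¹ ^ 2)
    (hQ.mul (by fun_prop)) hP0
    (fun x => mul_nonneg (hQ0 x) (by positivity))
    (K := ∫⁻ x, ENNReal.ofReal (Q x * (‖x‖ ^ 3)⁻¹)) (fun j => by
      calc ∫⁻ x in shell d j, ENNReal.ofReal (Q x * ‖x‖⁻¹ ^ 2)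
          ≤ ∫⁻ x in shell d j, ENNReal.ofReal ((2 : ℝ) ^ (j + 1))
              * ENNReal.ofReal (Q x * (‖x‖ ^ 3)⁻¹) := by
            refine setLIntegral_mono' (measurableSet_shell d j) fun x hx => ?_
            have hx0 : 0 < ‖x‖ := lt_trans (by positivity) hx.1
            rw [← ENNReal.ofReal_mul (by positivity)]
            refine ENNReal.ofReal_le_ofReal ?_
            have e : Q x * ‖x‖⁻¹ ^ 2 = ‖x‖ * (Q x * (‖x‖ ^ 3)⁻¹) := by
              field_simp
            rw [e]
            exact mul_le_mul_of_nonneg_right hx.2 (mul_nonneg (hQ0 x) (by positivity))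
        _ = ENNReal.ofReal ((2 : ℝ) ^ (j + 1)) * ∫⁻ x in shell d j,
              ENNReal.ofReal (Q x * (‖x‖ ^ 3)⁻¹) := lintegral_const_mul' _ _ ENNReal.ofReal_ne_top
        _ ≤ _ := by gcongr; exact Measure.restrict_le_self)
  refine le_trans (le_of_eq ?_) h
  refine lintegral_congr fun x => ?_
  rw [Real.sqrt_mul (hQ0 x), Real.sqrt_sq (by positivity), mul_assoc]

/-! ### Absorption -/

lemma le_toReal_mul_sqrt {a : ℝ} {N K : ℝ≥0∞} (hN : N ≠ ⊤) (hK : K ≠ ⊤)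
    (h : ENNReal.ofReal a ≤ N * K ^ (1 / 2 : ℝ)) : a ≤ N.toReal * √K.toReal := by
  have hne : N * K ^ (1 / 2 : ℝ) ≠ ⊤ :=
    ENNReal.mul_ne_top hN (ENNReal.rpow_ne_top_of_nonneg (by norm_num) hK)
  have h1 := (ENNReal.ofReal_le_iff_le_toReal hne).1 h
  rwa [ENNReal.toReal_mul, ← ENNReal.toReal_rpow, ← Real.sqrt_eq_rpow] at h1

/-- The ratio between the left-hand side of the estimate and the Morawetz source terms. -/
def cK (d : ℕ) (γ κ : ℝ) : ℝ :=
  4 / (1 - κ) + 2 / γ + ((d : ℝ) - 2) / ((1 - κ) * (((d : ℝ) - 1) * (d - 3) / 4))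

/-- The final constant. -/
def cC (d : ℕ) (γ κ : ℝ) : ℝ := 2 * cK d γ κ ^ 2 * (5 + (d : ℝ) ^ 2 / 8)

lemma cK_pos {d : ℕ} (hd : 3 < d) {γ κ : ℝ} (hγ : 0 < γ) (hκ1 : κ < 1) : 0 < cK d γ κ := by
  have hd' : (3 : ℝ) < d := by exact_mod_cast hd
  have h1 : 0 < 1 - κ := by linarith
  have h2 : 0 < (d : ℝ) - 1 := by linarith
  have h3 : 0 < (d : ℝ) - 3 := by linarith
  have h4 : 0 < (d : ℝ) - 2 := by linarith
  unfold cK; positivity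

/-- The absorption argument, as an inequality between real numbers. -/
lemma absorb {d : ℕ} (hd : 3 < d) {γ κ : ℝ} (hγ : 0 < γ) (hκ1 : κ < 1)
    {g W U R n ux s : ℝ} (hg : 0 ≤ g) (hW : 0 ≤ W) (hU : 0 ≤ U) (hux : 0 ≤ ux)
    (hs : 0 ≤ s)
    (h1 : γ / 2 * W + (1 - κ) * (((d : ℝ) - 1) * (d - 3) / 4) * U ≤ R)
    (h2 : g ≤ 4 * (κ * (((d : ℝ) - 1) * (d - 3) / 4) * U + R))
    (h3 : R ≤ n * √(2 * g) + (d : ℝ) / 2 * (n * √U) + √s * (n * √(2 * ux)))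
    (hκ : 0 ≤ κ) :
    g + W + U + ((d : ℝ) - 3) * U ≤ cC d γ κ * n ^ 2 + 1 / 4 * s * ux := by
  have hd' : (3 : ℝ) < d := by exact_mod_cast hd
  have hδ : 0 < 1 - κ := by linarith
  set c := ((d : ℝ) - 1) * (d - 3) / 4 with hc
  have hc0 : 0 < c := by
    have : 0 < ((d : ℝ) - 1) * (d - 3) := mul_pos (by linarith) (by linarith)
    linarith
  have hW' : W ≤ 2 / γ * R := by
    have : γ / 2 * W ≤ R := by
      have : 0 ≤ (1 - κ) * c * U := by positivity
      linarith
    calc W = 2 / γ * (γ / 2 * W) := by field_simp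
      _ ≤ _ := by gcongr
  have hcU : (1 - κ) * c * U ≤ R := by
    have : 0 ≤ γ / 2 * W := by positivity
    linarith
  have hU' : ((d : ℝ) - 2) * U ≤ ((d : ℝ) - 2) / ((1 - κ) * c) * R := by
    have : 0 < (d : ℝ) - 2 := by linarith
    calc ((d : ℝ) - 2) * U = ((d : ℝ) - 2) / ((1 - κ) * c) * ((1 - κ) * c * U) := by field_simp
      _ ≤ _ := by gcongr
  have hg' : g ≤ 4 / (1 - κ) * R := by
    have h4 : (1 - κ) * g ≤ 4 * R := by
      calc (1 - κ) * g ≤ (1 - κ) * (4 * (κ * c * U + R)) := by gcongr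
        _ = 4 * (κ * ((1 - κ) * c * U) + (1 - κ) * R) := by ring
        _ ≤ 4 * (κ * R + (1 - κ) * R) := by gcongr
        _ = 4 * R := by ring
    calc g = 1 / (1 - κ) * ((1 - κ) * g) := by field_simp
      _ ≤ 1 / (1 - κ) * (4 * R) := by gcongr
      _ = _ := by ring
  have hS : g + W + ((d : ℝ) - 2) * U ≤ cK d γ κ * R := by
    unfold cK
    rw [← hc, add_mul, add_mul]
    linarith
  have hK := cK_pos hd hγ hκ1
  set K := cK d γ κ with hKd
  have hR : K * R ≤ K * (n * √(2 * g) + (d : ℝ) / 2 * (n * √U) + √s * (n * √(2 * ux))) := by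
    gcongr
  have q1 : √(2 * g) ^ 2 = 2 * g := Real.sq_sqrt (by positivity)
  have q2 : √U ^ 2 = U := Real.sq_sqrt hU
  have q3 : √(2 * ux) ^ 2 = 2 * ux := Real.sq_sqrt (by positivity)
  have q4 : √s ^ 2 = s := Real.sq_sqrt hs
  have a1 : K * (n * √(2 * g)) ≤ g / 2 + K ^ 2 * n ^ 2 := by
    linarith [sq_nonneg (K * n - √(2 * g) / 2)]
  have a2 : K * ((d : ℝ) / 2 * (n * √U)) ≤ U / 2 + K ^ 2 * n ^ 2 * ((d : ℝ) ^ 2 / 8) := by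
    linarith [sq_nonneg (K * n * ((d : ℝ) / 2) - √U)]
  have a3 : K * (√s * (n * √(2 * ux))) ≤ s * ux / 8 + K ^ 2 * n ^ 2 * 4 := by
    have h5 : (√s * √(2 * ux)) ^ 2 = s * (2 * ux) := by rw [mul_pow, q3, q4]
    linarith [sq_nonneg (2 * (K * n) - √s * √(2 * ux) / 4)]
  have hdU : U ≤ ((d : ℝ) - 2) * U := by linarith [mul_nonneg (by linarith : (0 : ℝ) ≤ d - 3) hU]
  unfold cC
  rw [← hKd]
  linarith

section
variable {d : ℕ} {V : Ed d → ℝ} {V1 : Fin d → Ed d → ℝ} {τ e κ γ : ℝ}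
    {v : Ed d → ℝ} {v1 : Fin d → Ed d → ℝ} {v2 : Fin d → Fin d → Ed d → ℝ}
    {w : Ed d → ℝ} {w1 : Fin d → Ed d → ℝ} {w2 : Fin d → Fin d → Ed d → ℝ}
    {f1 f2 : Ed d → ℝ}

/-- The a priori estimate for `u = v + i w`. -/
lemma Sol.estimate (S : Sol V V1 τ e κ γ v v1 v2 w w1 w2 f1 f2) (he : e ≠ 0) (hκ1 : κ < 1) :
    nX2 (fun x => ENNReal.ofReal (gsq v1 x + gsq w1 x))
      + (∫⁻ x, ENNReal.ofReal (V x * (v x ^ 2 + w x ^ 2) * ‖x‖⁻¹))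
      + (∫⁻ x, ENNReal.ofReal ((v x ^ 2 + w x ^ 2) * (‖x‖ ^ 3)⁻¹))
      + ENNReal.ofReal ((d : ℝ) - 3)
        * (∫⁻ x, ENNReal.ofReal ((v x ^ 2 + w x ^ 2) * (‖x‖ ^ 3)⁻¹))
    ≤ ENNReal.ofReal (cC d γ κ) * nXstar (fun x => ENNReal.ofReal (f1 x ^ 2 + f2 x ^ 2)) ^ 2
      + ENNReal.ofReal (1 / 4 * (|e| + max 0 τ))
        * nX2 (fun x => ENNReal.ofReal (v x ^ 2 + w x ^ 2)) := by
  have hd' : (3 : ℝ) < d := by exact_mod_cast S.hd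
  have hK := cK_pos S.hd S.hγ hκ1
  have hC : 0 < cC d γ κ := by unfold cC; positivity
  have hs : 0 < |e| + max 0 τ := by
    have := abs_pos.2 he
    have := le_max_left 0 τ
    linarith
  set N := nXstar (fun x => ENNReal.ofReal (f1 x ^ 2 + f2 x ^ 2)) with hN
  set X := nX2 (fun x => ENNReal.ofReal (v x ^ 2 + w x ^ 2)) with hX
  by_cases hNt : N = ⊤
  · rw [hNt, ENNReal.top_pow two_ne_zero, ENNReal.mul_top (by simpa using hC), top_add]
    exact le_top
  by_cases hXt : X = ⊤
  · rw [hXt, ENNReal.mul_top (by simpa using hs), add_top]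
    exact le_top
  have hGle : nX2 (fun x => ENNReal.ofReal (gsq v1 x + gsq w1 x))
      ≤ ENNReal.ofReal (4 * ∫ x, morB e κ v v1 w w1 f1 f2 x) :=
    iSup₂_le fun R hR => S.ball_grad hR
  set GX := nX2 (fun x => ENNReal.ofReal (gsq v1 x + gsq w1 x)) with hGX
  have hGt : GX ≠ ⊤ := (hGle.trans_lt ENNReal.ofReal_lt_top).ne
  have hU0 : ∀ x, 0 ≤ v x ^ 2 + w x ^ 2 := fun x => by positivity
  have hF0 : ∀ x, 0 ≤ f1 x ^ 2 + f2 x ^ 2 := fun x => by positivity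
  have hW0 : ∀ x, 0 ≤ V x * (v x ^ 2 + w x ^ 2) * ‖x‖⁻¹ := fun x => by
    have := S.V0 x
    positivity
  have h30 : ∀ x : Ed d, 0 ≤ (v x ^ 2 + w x ^ 2) * (‖x‖ ^ 3)⁻¹ := fun x => by positivity
  have mF := S.iff.1.aemeasurable
  have mU := S.iu.1.aemeasurable
  have mG := S.ig.1.aemeasurable
  have b1 := duality_nX2 S.d_pos mF mG hF0 S.G_nonneg
  rw [← ofReal_integral_eq_lintegral_ofReal S.ifg
    (Eventually.of_forall fun x => by simp only [Pi.zero_apply]; positivity), ← hN, ← hGX] at b1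
  have b2 := duality_weight S.d_pos mF mU hF0 hU0
  rw [← ofReal_integral_eq_lintegral_ofReal S.ifur
    (Eventually.of_forall fun x => by simp only [Pi.zero_apply]; positivity), ← hN,
    ← ofReal_integral_eq_lintegral_ofReal S.i3 (Eventually.of_forall h30)] at b2
  have b3 := duality_nX2 S.d_pos mF mU hF0 hU0
  rw [← ofReal_integral_eq_lintegral_ofReal S.ifu
    (Eventually.of_forall fun x => by simp only [Pi.zero_apply]; positivity), ← hN, ← hX] at b3
  have c1 := le_toReal_mul_sqrt hNt (ENNReal.mul_ne_top (by simp) hGt) b1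
  have c2 := le_toReal_mul_sqrt hNt ENNReal.ofReal_ne_top b2
  have c3 := le_toReal_mul_sqrt hNt (ENNReal.mul_ne_top (by simp) hXt) b3
  have hU3 : 0 ≤ ∫ x, (v x ^ 2 + w x ^ 2) * (‖x‖ ^ 3)⁻¹ := integral_nonneg h30
  have hW : 0 ≤ ∫ x, V x * (v x ^ 2 + w x ^ 2) * ‖x‖⁻¹ := integral_nonneg hW0
  rw [ENNReal.toReal_mul, ENNReal.toReal_ofNat] at c1 c3
  rw [ENNReal.toReal_ofReal hU3] at c2
  have hg := ENNReal.toReal_mono ENNReal.ofReal_ne_top hGle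
  rw [ENNReal.toReal_ofReal (mul_nonneg (by norm_num) S.morB_nonneg), S.integral_morB] at hg
  have hR : morR e v v1 w w1 f1 f2 ≤ N.toReal * √(2 * GX.toReal)
      + (d : ℝ) / 2 * (N.toReal * √(∫ x, (v x ^ 2 + w x ^ 2) * (‖x‖ ^ 3)⁻¹))
      + √(|e| + max 0 τ) * (N.toReal * √(2 * X.toReal)) := by
    unfold morR
    refine add_le_add (add_le_add c1 ?_) (S.cross_term.trans ?_)
    · gcongr
    · gcongr
  have hfin := absorb S.hd S.hγ hκ1 ENNReal.toReal_nonneg hW hU3 ENNReal.toReal_nonneg hs.le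
    S.absorbed hg hR S.hκ
  rw [← ofReal_integral_eq_lintegral_ofReal S.i3 (Eventually.of_forall h30),
    ← ofReal_integral_eq_lintegral_ofReal S.iVr (Eventually.of_forall hW0),
    ← ENNReal.ofReal_toReal hGt, ← ENNReal.ofReal_toReal hNt, ← ENNReal.ofReal_toReal hXt,
    ← ENNReal.ofReal_mul (by linarith), ← ENNReal.ofReal_pow ENNReal.toReal_nonneg,
    ← ENNReal.ofReal_mul hC.le, ← ENNReal.ofReal_mul (by positivity),
    ← ENNReal.ofReal_add ENNReal.toReal_nonneg hW, ← ENNReal.ofReal_add (by positivity) hU3,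
    ← ENNReal.ofReal_add (by positivity) (mul_nonneg (by linarith) hU3),
    ← ENNReal.ofReal_add (by positivity) (by positivity)]
  exact ENNReal.ofReal_le_ofReal hfin

end

/-! ### Classical solutions -/

lemma contDiff_pd {d : ℕ} {u : Ed d → ℂ} (hu : ContDiff ℝ 2 u) (i : Fin d) :
    ContDiff ℝ 1 (pd u i) :=
  (hu.fderiv_right (m := 1) (by norm_num)).clm_apply contDiff_const

lemma pd_symm {d : ℕ} {u : Ed d → ℂ} (hu : ContDiff ℝ 2 u) (i j : Fin d) (x : Ed d) :
    fderiv ℝ (pd u i) x (bv j) = fderiv ℝ (pd u j) x (bv i) := by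
  have hD : DifferentiableAt ℝ (fderiv ℝ u) x :=
    (hu.fderiv_right (m := 1) (by norm_num)).differentiable (by norm_num) x
  have key : ∀ i j : Fin d, fderiv ℝ (pd u i) x (bv j)
      = fderiv ℝ (fderiv ℝ u) x (bv j) (bv i) := fun i j => by
    have h := (hD.hasFDerivAt.clm_apply (hasFDerivAt_const (bv i) x)).fderiv
    have e : pd u i = fun y => (fderiv ℝ u y) (bv i) := rfl
    rw [e, h]
    simp
  rw [key, key]
  exact (hu.contDiffAt.isSymmSndFDerivAt (by simp)) _ _

/-- The real or imaginary part of `u`, with its partial derivatives. -/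
lemma c2Data_of_contDiff {d : ℕ} {u : Ed d → ℂ} (hu : ContDiff ℝ 2 u) (L : ℂ →L[ℝ] ℝ) :
    C2Data (fun x => L (u x)) (fun i x => L (pd u i x))
      (fun i j x => L (fderiv ℝ (pd u i) x (bv j))) where
  d1 j x := by
    have h := (hu.differentiable (by norm_num) x).hasFDerivAt
    exact (L.hasFDerivAt.comp x h).hasLineDerivAt (bv j)
  d2 i j x := by
    have h := ((contDiff_pd hu i).differentiable (by norm_num) x).hasFDerivAt
    exact (L.hasFDerivAt.comp x h).hasLineDerivAt (bv j)
  symm i j x := by rw [pd_symm hu]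
  c0 := L.continuous.comp hu.continuous
  c1 i := L.continuous.comp (contDiff_pd hu i).continuous
  c2 i j := L.continuous.comp
    (((contDiff_pd hu i).continuous_fderiv (by norm_num)).clm_apply continuous_const)

lemma enorm_sq_eq (z : ℂ) : (‖z‖₊ : ℝ≥0∞) ^ 2 = ENNReal.ofReal (z.re ^ 2 + z.im ^ 2) := by
  have h : z.re ^ 2 + z.im ^ 2 = ‖z‖ ^ 2 := by
    rw [Complex.sq_norm, Complex.normSq_apply]; ring
  rw [h, ENNReal.ofReal_pow (norm_nonneg _)]
  congr 1
  exact (ofReal_norm z).symm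

lemma usq_eq {d : ℕ} (u : Ed d → ℂ) (x : Ed d) :
    usq u x = ENNReal.ofReal ((u x).re ^ 2 + (u x).im ^ 2) := enorm_sq_eq _

lemma gradSq_eq {d : ℕ} (u : Ed d → ℂ) (x : Ed d) :
    gradSq u x = ENNReal.ofReal
      (gsq (fun i x => (pd u i x).re) x + gsq (fun i x => (pd u i x).im) x) := by
  unfold gradSq gsq
  rw [← Finset.sum_add_distrib, ENNReal.ofReal_sum_of_nonneg fun i _ => by positivity]
  exact Finset.sum_congr rfl fun i _ => enorm_sq_eq _

/-- `|x|⁻³` is locally integrable because `d > 3`. -/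
lemma integrable_cube {d : ℕ} (hd : 3 < d) {U : Ed d → ℝ} (hc : Continuous U)
    (hU0 : ∀ x, 0 ≤ U x) (hU : Integrable U) : Integrable fun x => U x * (‖x‖ ^ 3)⁻¹ := by
  have hm : AEStronglyMeasurable fun x : Ed d => U x * (‖x‖ ^ 3)⁻¹ :=
    hU.1.mul (by fun_prop : Measurable fun x : Ed d => (‖x‖ ^ 3)⁻¹).aestronglyMeasurable
  obtain ⟨M, hM⟩ := (isCompact_closedBall (0 : Ed d) 1).exists_bound_of_continuousOn
    hc.continuousOn
  have h1 : IntegrableOn (fun x => U x * (‖x‖ ^ 3)⁻¹) (ball 0 1) := by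
    have hdim : (3 : ℝ) < Module.finrank ℝ (Ed d) := by
      rw [finrank_euclideanSpace_fin]; exact_mod_cast hd
    refine integrableOn_ball_of_norm_le_rpow (by rw [finrank_euclideanSpace_fin]; omega) hdim (C := M) ?_ hm
    refine (ae_restrict_mem measurableSet_ball).mono fun x hx => ?_
    have hx1 : ‖U x‖ ≤ M := hM x (ball_subset_closedBall hx)
    rw [norm_mul, Real.rpow_neg (norm_nonneg x), show (3 : ℝ) = ((3 : ℕ) : ℝ) by norm_num,
      Real.rpow_natCast, norm_inv, norm_pow, norm_norm]
    gcongr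
  have h2 : IntegrableOn (fun x => U x * (‖x‖ ^ 3)⁻¹) (ball 0 1)ᶜ := by
    refine Integrable.mono' hU.integrableOn hm.restrict ?_
    refine (ae_restrict_mem measurableSet_ball.compl).mono fun x hx => ?_
    have hx1 : 1 ≤ ‖x‖ := by simpa using hx
    have h0 := hU0 x
    rw [Real.norm_eq_abs, abs_of_nonneg (by positivity)]
    exact mul_le_of_le_one_right h0 (inv_le_one_of_one_le₀ (one_le_pow₀ hx1))
  have := h1.union h2
  rwa [union_compl_self, integrableOn_univ] at this

lemma integrable_of_lintegral {d : ℕ} {P : Ed d → ℝ} (hm : AEStronglyMeasurable P)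
    (h0 : ∀ x, 0 ≤ P x) (h : ∫⁻ x, ENNReal.ofReal (P x) < ⊤) : Integrable P := by
  refine ⟨hm, ?_⟩
  rwa [hasFiniteIntegral_iff_ofReal (Eventually.of_forall h0)]

lemma fderiv_apply_self {d : ℕ} (A : Ed d →L[ℝ] ℝ) (x : Ed d) : A x = ∑ j, x j * A (bv j) := by
  have h : x = ∑ j, x j • bv j := by
    have := (EuclideanSpace.basisFun (Fin d) ℝ).sum_repr x
    simpa using this.symm
  conv_lhs => rw [h]
  simp

lemma lap_comp {d : ℕ} (u : Ed d → ℂ) (L : ℂ →L[ℝ] ℝ) (x : Ed d) :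
    ∑ j, L (fderiv ℝ (pd u j) x (bv j)) = L (lap u x) := by
  rw [lap, map_sum]

/-- A classical solution of the resolvent equation provides the data of `Sol`. -/
lemma sol_of_classical {d : ℕ} (hd : 3 < d) {γ κ : ℝ} (hγ : 0 < γ) (hκ : 0 ≤ κ) {V : Ed d → ℝ}
    (hV0 : ∀ x, 0 ≤ V x) (hV : ContDiffOn ℝ 1 V ({(0 : Ed d)}ᶜ))
    (hrep : ∀ x : Ed d, x ≠ 0 →
      γ * V x + ‖x‖ * radialDeriv V x ≤ κ * ((d : ℝ) - 1) * ((d : ℝ) - 3) / (2 * ‖x‖ ^ 2))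
    {ε τ σ : ℝ} {u f : Ed d → ℂ} (hu : ContDiff ℝ 2 u)
    (h1 : (∫⁻ x, usq u x) < ⊤) (h2 : (∫⁻ x, gradSq u x) < ⊤) (h3 : (∫⁻ x, usq f x) < ⊤)
    (heq : ∀ x, -lap u x + (V x : ℂ) * u x + (σ : ℂ) * ((ε : ℂ) * Complex.I) * u x
        - (τ : ℂ) * u x = f x) :
    Sol V (fun j x => fderiv ℝ V x (bv j)) τ (σ * ε) κ γ
      (fun x => (u x).re) (fun i x => (pd u i x).re)
      (fun i j x => (fderiv ℝ (pd u i) x (bv j)).re)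
      (fun x => (u x).im) (fun i x => (pd u i x).im)
      (fun i j x => (fderiv ℝ (pd u i) x (bv j)).im)
      (fun x => (f x).re) (fun x => (f x).im) := by
  have hv := c2Data_of_contDiff hu Complex.reCLM
  have hw := c2Data_of_contDiff hu Complex.imCLM
  simp only [Complex.reCLM_apply, Complex.imCLM_apply] at hv hw
  have hopen : IsOpen ({(0 : Ed d)}ᶜ) := isOpen_compl_singleton
  have eq1 : ∀ x, ∑ j, (fderiv ℝ (pd u j) x (bv j)).re
      = (V x - τ) * (u x).re - σ * ε * (u x).im - (f x).re := fun x => by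
    have h := lap_comp u Complex.reCLM x
    simp only [Complex.reCLM_apply] at h
    rw [h]
    have h' := congrArg Complex.re (heq x)
    simp at h'
    linarith
  have eq2 : ∀ x, ∑ j, (fderiv ℝ (pd u j) x (bv j)).im
      = (V x - τ) * (u x).im + σ * ε * (u x).re - (f x).im := fun x => by
    have h := lap_comp u Complex.imCLM x
    simp only [Complex.imCLM_apply] at h
    rw [h]
    have h' := congrArg Complex.im (heq x)
    simp at h'
    linarith
  have iu : Integrable fun x => (u x).re ^ 2 + (u x).im ^ 2 := by
    refine integrable_of_lintegral ?_ (fun x => by positivity) (by simpa only [usq_eq] using h1)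
    have := hu.continuous
    exact (by fun_prop : Continuous fun x => (u x).re ^ 2 + (u x).im ^ 2).aestronglyMeasurable
  refine
    { hd := hd
      hγ := hγ
      hκ := hκ
      hv := hv
      hw := hw
      V0 := hV0
      Vc := hV.continuousOn
      V1c := fun j => (hV.continuousOn_fderiv_of_isOpen hopen le_rfl).clm_apply
        continuousOn_const
      Vd := fun j x hx => ?_
      rep := fun x hx => ?_
      eq1 := eq1
      eq2 := eq2
      iu := iu
      ig := ?_
      iff := ?_
      i3 := ?_ }
  · exact ((hV.contDiffAt (hopen.mem_nhds hx)).differentiableAt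
      (by norm_num)).hasFDerivAt.hasLineDerivAt (bv j)
  · have h := hrep x hx
    have hr : ‖x‖ ≠ 0 := norm_ne_zero_iff.2 hx
    rwa [radialDeriv, mul_div_cancel₀ _ hr, fderiv_apply_self] at h
  · refine integrable_of_lintegral ?_ (fun x => add_nonneg (gsq_nonneg _ _) (gsq_nonneg _ _))
      (by simpa only [gradSq_eq] using h2)
    exact ((gsq_continuous hv).add (gsq_continuous hw)).aestronglyMeasurable
  · refine integrable_of_lintegral ?_ (fun x => by positivity) (by simpa only [usq_eq] using h3)
    refine aesm_of_continuousOn (by omega) ?_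
    have hc : ContinuousOn f {0}ᶜ := by
      have hl : Continuous fun x => lap u x := by
        unfold lap
        exact continuous_finsetSum _ fun i _ =>
          ((contDiff_pd hu i).continuous_fderiv (by norm_num)).clm_apply continuous_const
      have hVc := hV.continuousOn
      have huc := hu.continuous
      have : ContinuousOn (fun x => -lap u x + (V x : ℂ) * u x
          + (σ : ℂ) * ((ε : ℂ) * Complex.I) * u x - (τ : ℂ) * u x) {0}ᶜ := by
        fun_prop
      exact this.congr fun x _ => (heq x).symm
    fun_prop
  · refine integrable_cube hd ?_ (fun x => by positivity) iu
    have := hu.continuous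
    fun_prop

/-- intermediate a priori estimate (estimate (17) of the paper)
for the resolvent equation with a repulsive potential, d > 3. -/
theorem stmt_2 (d : ℕ) (hd : 3 < d) (γ η : ℝ) (hγ : 0 < γ) (hη : 0 < η) :
    ∃ C : ℝ, 0 < C ∧
      ∀ (V : Ed d → ℝ), (∀ x, 0 ≤ V x) → ContDiffOn ℝ 1 V ({(0 : Ed d)}ᶜ) →
      (∀ x : Ed d, x ≠ 0 →
        γ * V x + ‖x‖ * radialDeriv V x ≤ (1 - η) * ((d:ℝ) - 1) * ((d:ℝ) - 3) / (2 * ‖x‖^2)) →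
      ∀ (ε τ : ℝ), ε ≠ 0 →
      ∀ (σ : ℝ), σ = 1 ∨ σ = -1 →
      ∀ (u f : Ed d → ℂ), ContDiff ℝ 2 u →
      (∫⁻ x, usq u x) < ⊤ → (∫⁻ x, gradSq u x) < ⊤ → (∫⁻ x, usq f x) < ⊤ →
      (∀ x, -lap u x + (V x : ℂ) * u x + (σ : ℂ) * ((ε : ℂ) * Complex.I) * u x
        - (τ : ℂ) * u x = f x) →
      nX2 (gradSq u)
        + (∫⁻ x, ENNReal.ofReal (V x / ‖x‖) * usq u x)
        + (⨆ (R : ℝ) (_ : 0 < R),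
            (ENNReal.ofReal (R^3))⁻¹ * ∫⁻ x in ball (0 : Ed d) R, usq u x)
        + ENNReal.ofReal ((d:ℝ) - 3) * (∫⁻ x, usq u x / ENNReal.ofReal (‖x‖^3))
      ≤ ENNReal.ofReal C * (nXstar (usq f)) ^ 2
        + ENNReal.ofReal ((1/4) * (|ε| + max 0 τ)) * nX2 (usq u) := by
  have hd' : (3 : ℝ) < d := by exact_mod_cast hd
  -- decreasing `η` to at most `1` keeps the remainder coefficient `κ = 1 - η` nonnegative
  set κ : ℝ := 1 - min η 1 with hκd
  have hκ0 : 0 ≤ κ := by have := min_le_right η 1; linarith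
  have hκ1 : κ < 1 := by have : 0 < min η 1 := lt_min hη one_pos; linarith
  have hK := cK_pos hd hγ hκ1
  refine ⟨cC d γ κ, by unfold cC; positivity, ?_⟩
  intro V hV0 hV hrep ε τ hε σ hσ u f hu h1 h2 h3 heq
  have hrep' : ∀ x : Ed d, x ≠ 0 →
      γ * V x + ‖x‖ * radialDeriv V x ≤ κ * ((d : ℝ) - 1) * ((d : ℝ) - 3) / (2 * ‖x‖ ^ 2) := by
    intro x hx
    refine (hrep x hx).trans ?_
    have := min_le_left η 1
    have e1 : 0 ≤ (d : ℝ) - 1 := by linarith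
    have e2 : 0 ≤ (d : ℝ) - 3 := by linarith
    gcongr
    linarith
  have S := sol_of_classical hd hγ hκ0 hV0 hV hrep' hu h1 h2 h3 heq
  have hσε : |σ * ε| = |ε| := by
    rcases hσ with h | h <;> simp [h]
  have hσ0 : σ * ε ≠ 0 := by
    rw [← abs_ne_zero, hσε]
    exact abs_ne_zero.2 hε
  have est := S.estimate hσ0 hκ1
  rw [hσε] at est
  have ef : usq f = fun x => ENNReal.ofReal ((f x).re ^ 2 + (f x).im ^ 2) := funext (usq_eq f)
  have eu : usq u = fun x => ENNReal.ofReal ((u x).re ^ 2 + (u x).im ^ 2) := funext (usq_eq u)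
  have eg : gradSq u = _ := funext (gradSq_eq u)
  rw [← ef, ← eu, ← eg] at est
  refine le_trans ?_ est
  have t3 : (∫⁻ x, usq u x / ENNReal.ofReal (‖x‖ ^ 3))
      = ∫⁻ x, ENNReal.ofReal (((u x).re ^ 2 + (u x).im ^ 2) * (‖x‖ ^ 3)⁻¹) := by
    refine lintegral_congr_ae ?_
    filter_upwards [ae_ne_zero (d := d) (by omega)] with x hx
    have hr : 0 < ‖x‖ := norm_pos_iff.2 hx
    rw [usq_eq, ← ENNReal.ofReal_div_of_pos (by positivity), div_eq_mul_inv]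
  refine add_le_add (add_le_add (add_le_add le_rfl ?_) ?_) (by rw [t3])
  · refine lintegral_mono fun x => ?_
    have := hV0 x
    rw [usq_eq, ← ENNReal.ofReal_mul (by positivity)]
    refine ENNReal.ofReal_le_ofReal (le_of_eq ?_)
    ring
  · refine iSup₂_le fun R hR => ?_
    rw [← ENNReal.ofReal_inv_of_pos (by positivity), ← lintegral_const_mul' _ _ ENNReal.ofReal_ne_top]
    refine le_trans (lintegral_mono_ae ?_) (lintegral_mono' Measure.restrict_le_self le_rfl)
    filter_upwards [ae_restrict_mem measurableSet_ball,
      ae_restrict_of_ae (ae_ne_zero (d := d) (by omega))] with x hx hx0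
    have hr : 0 < ‖x‖ := norm_pos_iff.2 hx0
    rw [mem_ball_zero_iff] at hx
    rw [usq_eq, ← ENNReal.ofReal_mul (by positivity)]
    refine ENNReal.ofReal_le_ofReal ?_
    rw [mul_comm]
    gcongr
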